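/- The following six integrals all equal [Γ(1/4)]⁸ / (128 π²): ∫_0^1 [K(√(1−k²))]³ dk, (10/3) ∫_0^1 [K(k)]³ dk, 5 ∫_0^1 [K(k)]³ k dk, 3 ∫_0^1 [K(k)]² K(√(1−k²)) dk, 2 ∫_0^1 K(k) [K(√(1−k²))]² dk, and 6 ∫_0^1 [K(k)]² K(√(1−k²)) k dk. -/

import Mathlib

open Real MeasureTheory intervalIntegral Filter Topology

/-- Complete elliptic integral of the first kind. -/
noncomputable def ellipticK (k : ℝ) : ℝ :=
  ∫ θ in (0:ℝ)..(π/2), 1 / Real.sqrt (1 - k^2 * Real.sin θ ^ 2)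

/-- The complementary integral in algebraic form. -/
noncomputable def JR (c : ℝ) : ℝ :=
  ∫ t in Set.Ioi (0:ℝ), 1 / Real.sqrt ((1 + t^2) * (1 + c^2 * t^2))

lemma integrable_JR {c : ℝ} (hc : 0 < c) :
    Integrable (fun t : ℝ => 1 / Real.sqrt ((1 + t^2) * (1 + c^2 * t^2))) := by
  have hm : 0 < min 1 (c^2) := lt_min one_pos (by positivity)
  have h1 : Integrable (fun t : ℝ => (1 / Real.sqrt (min 1 (c^2))) * (1 + t^2)⁻¹) :=
    integrable_inv_one_add_sq.const_mul _
  refine h1.mono' ?_ ?_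
  · refine Continuous.aestronglyMeasurable ?_
    refine continuous_const.div (by fun_prop) ?_
    intro t
    have : 0 < (1 + t^2) * (1 + c^2 * t^2) := by positivity
    exact (Real.sqrt_pos.2 this).ne'
  · refine Eventually.of_forall fun t => ?_
    rw [Real.norm_of_nonneg (by positivity)]
    have h2 : Real.sqrt (min 1 (c^2)) * (1 + t^2) ≤ Real.sqrt ((1 + t^2) * (1 + c^2 * t^2)) := by
      have : Real.sqrt (min 1 (c^2)) * (1 + t^2) = Real.sqrt (min 1 (c^2) * (1 + t^2)^2) := by
        rw [Real.sqrt_mul hm.le, Real.sqrt_sq (by positivity)]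
      rw [this]
      apply Real.sqrt_le_sqrt
      have a1 : min 1 (c^2) ≤ 1 := min_le_left _ _
      have a2 : min 1 (c^2) ≤ c^2 := min_le_right _ _
      have a3 : min 1 (c^2) * (1 + t^2) ≤ 1 + c^2 * t^2 := by nlinarith [sq_nonneg t]
      nlinarith [sq_nonneg t]
    calc 1 / Real.sqrt ((1 + t^2) * (1 + c^2 * t^2))
        ≤ 1 / (Real.sqrt (min 1 (c^2)) * (1 + t^2)) :=
          one_div_le_one_div_of_le (by positivity) h2
      _ = _ := by field_simp

lemma JR_nonneg (c : ℝ) : 0 ≤ JR c := by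
  unfold JR; exact integral_nonneg fun t => by positivity

lemma tan_image : Real.tan '' Set.Ioo 0 (π/2) = Set.Ioi 0 := by
  ext y; constructor
  · rintro ⟨x, hx, rfl⟩
    exact Real.tan_pos_of_pos_of_lt_pi_div_two hx.1 hx.2
  · intro hy
    exact ⟨Real.arctan y, ⟨Real.arctan_pos.2 hy, Real.arctan_lt_pi_div_two y⟩, Real.tan_arctan y⟩

lemma ellipticK_eq {c k : ℝ} (hc : k^2 = 1 - c^2) : ellipticK k = JR c := by
  unfold ellipticK JR
  rw [intervalIntegral.integral_of_le (by positivity), integral_Ioc_eq_integral_Ioo, ← tan_image]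
  have hcos : ∀ x ∈ Set.Ioo 0 (π/2), 0 < Real.cos x := fun x hx =>
    Real.cos_pos_of_mem_Ioo ⟨by linarith [hx.1, Real.pi_pos], hx.2⟩
  rw [integral_image_eq_integral_abs_deriv_smul (f' := fun x => 1 / Real.cos x ^ 2) measurableSet_Ioo
    (fun x hx => (Real.hasDerivAt_tan (hcos x hx).ne').hasDerivWithinAt)
    (Real.injOn_tan.mono (Set.Ioo_subset_Ioo (by linarith [Real.pi_pos]) le_rfl))]
  refine setIntegral_congr_fun measurableSet_Ioo fun x hx => ?_
  have h := hcos x hx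
  simp only [smul_eq_mul]
  rw [abs_of_pos (by positivity), hc]
  have e1 : (1 + Real.tan x^2) * (1 + c^2 * Real.tan x^2)
      = (1 - (1 - c^2) * Real.sin x^2) / (Real.cos x^2)^2 := by
    rw [Real.tan_eq_sin_div_cos]; field_simp
    have := Real.sin_sq_add_cos_sq x
    rw [show Real.cos x^2 = 1 - Real.sin x^2 by linarith]; ring
  rw [e1, Real.sqrt_div' _ (by positivity), Real.sqrt_sq (by positivity)]
  have h' := h.ne'
  rw [one_div_div, ← mul_div_assoc, one_div_mul_cancel (pow_ne_zero _ h')]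

lemma gauss_deriv {s : ℝ} (hs : 0 < s) :
    HasDerivAt (fun s : ℝ => (s - s⁻¹)/2) ((1 + 1/s^2)/2) s := by
  have := ((hasDerivAt_id s).sub (hasDerivAt_inv hs.ne')).div_const 2
  exact this.congr_deriv (by ring)

lemma gauss_image : (fun s : ℝ => (s - s⁻¹)/2) '' Set.Ioi 0 = Set.univ := by
  refine Set.eq_univ_of_forall fun u => ?_
  have h0 : 0 < 1 + u^2 := by positivity
  have h1 : |u| < Real.sqrt (1 + u^2) := by
    rw [← Real.sqrt_sq_eq_abs]; exact Real.sqrt_lt_sqrt (sq_nonneg _) (by linarith)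
  have h2 := Real.sq_sqrt h0.le
  have h3 : 0 < u + Real.sqrt (1 + u^2) := by linarith [neg_abs_le u]
  refine ⟨u + Real.sqrt (1 + u^2), h3, ?_⟩
  have : (u + Real.sqrt (1 + u^2))⁻¹ = Real.sqrt (1 + u^2) - u := by
    rw [inv_eq_one_div, div_eq_iff h3.ne']; nlinarith
  simp only [this]; ring

lemma gauss_inj : Set.InjOn (fun s : ℝ => (s - s⁻¹)/2) (Set.Ioi 0) := by
  intro s hs t ht h
  have hs' : 0 < s := hs
  have ht' : 0 < t := ht
  simp only at h
  have h2 : (s - t) * (s * t + 1) = 0 := by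
    have : s - s⁻¹ = t - t⁻¹ := by linarith
    field_simp at this
    nlinarith
  rcases mul_eq_zero.1 h2 with h3 | h3
  · linarith
  · nlinarith [mul_pos hs' ht']

lemma N_eq {c : ℝ} (hc : 0 < c) :
    ∫ s in Set.Ioi (0:ℝ), 1 / Real.sqrt (s^4 + (4/c^2 - 2) * s^2 + 1) = c * JR c := by
  have h1 : 2 * JR c = ∫ u : ℝ, 1 / Real.sqrt ((1 + u^2) * (1 + c^2 * u^2)) := by
    unfold JR
    rw [← integral_comp_abs (f := fun u => 1 / Real.sqrt ((1 + u^2) * (1 + c^2 * u^2)))]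
    simp only [sq_abs]
  rw [← setIntegral_univ, ← gauss_image, integral_image_eq_integral_abs_deriv_smul measurableSet_Ioi
    (fun x hx => (gauss_deriv hx).hasDerivWithinAt) gauss_inj] at h1
  have h2 : ∫ s in Set.Ioi (0:ℝ), 1 / Real.sqrt (s^4 + (4/c^2 - 2) * s^2 + 1) = c/2 * (2 * JR c) := by
    rw [h1, ← MeasureTheory.integral_const_mul]
    refine setIntegral_congr_fun measurableSet_Ioi fun s hs => ?_
    have hs' : 0 < s := hs
    simp only [smul_eq_mul]
    rw [abs_of_pos (by positivity)]
    have e1 : (1 + ((s - s⁻¹)/2)^2) * (1 + c^2 * ((s - s⁻¹)/2)^2)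
       = ((1 + 1/s^2)/2 * (c/2))^2 * (s^4 + (4/c^2 - 2) * s^2 + 1) := by
      field_simp; ring
    rw [e1, Real.sqrt_mul (by positivity), Real.sqrt_sq (by positivity)]
    field_simp
  rw [h2]; ring

lemma N_eq' {m : ℝ} (hm : 0 < m) :
    ∫ s in Set.Ioi (0:ℝ), 1 / Real.sqrt (s^4 + (m + 1/m) * s^2 + 1) = Real.sqrt m * JR m := by
  have h := integral_comp_mul_left_Ioi (fun s : ℝ => 1 / Real.sqrt (s^4 + (m + 1/m) * s^2 + 1)) 0
    (Real.sqrt_pos.2 hm)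
  rw [mul_zero, smul_eq_mul] at h
  have h2 : JR m = ∫ x in Set.Ioi (0:ℝ), 1 / Real.sqrt ((Real.sqrt m * x)^4 + (m + 1/m) * (Real.sqrt m * x)^2 + 1) := by
    unfold JR
    refine setIntegral_congr_fun measurableSet_Ioi fun s hs => ?_
    have e : Real.sqrt m ^ 2 = m := Real.sq_sqrt hm.le
    have e4 : Real.sqrt m ^ 4 = m^2 := by rw [show Real.sqrt m^4 = (Real.sqrt m^2)^2 by ring, e]
    simp only [mul_pow, e, e4]
    congr 2; field_simp; ring
  rw [h2, h, ← mul_assoc, mul_inv_cancel₀ (Real.sqrt_pos.2 hm).ne', one_mul]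

/-- Landen's transformation. -/
lemma landen {l : ℝ} (h0 : 0 < l) (h1 : l < 1) :
    JR ((1 - l)/(1 + l)) = (1 + l) * JR (Real.sqrt (1 - l^2)) := by
  have hm : 0 < (1 - l)/(1 + l) := div_pos (by linarith) (by linarith)
  have hq : 0 < 1 - l^2 := by nlinarith
  have hc : 0 < Real.sqrt (1 - l^2) := Real.sqrt_pos.2 hq
  have a := N_eq' hm
  have b := N_eq hc
  have e : 4 / Real.sqrt (1 - l^2)^2 - 2 = (1 - l)/(1 + l) + 1/((1 - l)/(1 + l)) := by
    rw [Real.sq_sqrt hq.le]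
    have : 1 - l ≠ 0 := by linarith
    have : 1 + l ≠ 0 := by linarith
    rw [show 1 - l^2 = (1-l)*(1+l) by ring]
    field_simp; ring
  rw [e, a] at b
  have hs := Real.sqrt_pos.2 hm
  have e2 : Real.sqrt (1 - l^2) = (1 + l) * Real.sqrt ((1 - l)/(1 + l)) := by
    have : 1 - l^2 = (1 + l)^2 * ((1 - l)/(1 + l)) := by field_simp; ring
    rw [this, Real.sqrt_mul (by positivity), Real.sqrt_sq (by linarith)]
  apply mul_left_cancel₀ hs.ne'
  rw [b, ← mul_assoc, mul_comm (Real.sqrt ((1 - l)/(1 + l))) (1 + l), ← e2]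

lemma JR_meas : Measurable JR := by
  have : StronglyMeasurable (fun c : ℝ => ∫ t in Set.Ioi (0:ℝ), (fun p : ℝ × ℝ => 1 / Real.sqrt ((1 + p.2^2) * (1 + p.1^2 * p.2^2))) (c, t)) := by
    refine StronglyMeasurable.integral_prod_right' (ν := volume.restrict (Set.Ioi (0:ℝ)))
      (f := fun p : ℝ × ℝ => 1 / Real.sqrt ((1 + p.2^2) * (1 + p.1^2 * p.2^2))) ?_
    apply Measurable.stronglyMeasurable
    fun_prop
  exact this.measurable

/-- K as a function of the modulus -/
noncomputable def UK (k : ℝ) : ℝ := JR (Real.sqrt (1 - k^2))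

lemma UK_meas : Measurable UK := JR_meas.comp (by fun_prop)
lemma UK_nonneg (k : ℝ) : 0 ≤ UK k := JR_nonneg _

lemma lan_deriv {l : ℝ} (hl : l ∈ Set.Ioo (0:ℝ) 1) :
    HasDerivAt (fun l : ℝ => (1 - l)/(1 + l)) (-2/(1 + l)^2) l := by
  have h : 1 + l ≠ 0 := by linarith [hl.1]
  have := ((hasDerivAt_id l).const_sub 1).div ((hasDerivAt_id l).const_add 1) h
  exact this.congr_deriv (by simp only [id]; ring)

lemma lan_invol {l : ℝ} (hl : 0 < l) : (1 - (1 - l)/(1 + l))/(1 + (1 - l)/(1 + l)) = l := by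
  have h : 1 + l ≠ 0 := by linarith
  field_simp; ring

lemma lan_mem {l : ℝ} (hl : l ∈ Set.Ioo (0:ℝ) 1) : (1 - l)/(1 + l) ∈ Set.Ioo (0:ℝ) 1 :=
  ⟨div_pos (by linarith [hl.2]) (by linarith [hl.1]),
    by rw [div_lt_one (by linarith [hl.1])]; linarith [hl.1]⟩

lemma lan_image : (fun l : ℝ => (1 - l)/(1 + l)) '' Set.Ioo 0 1 = Set.Ioo 0 1 := by
  ext y; constructor
  · rintro ⟨l, hl, rfl⟩; exact lan_mem hl
  · intro hy; exact ⟨_, lan_mem hy, lan_invol hy.1⟩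

lemma lan_inj : Set.InjOn (fun l : ℝ => (1 - l)/(1 + l)) (Set.Ioo 0 1) := by
  intro a ha b hb h
  simp only at h
  rw [← lan_invol ha.1, ← lan_invol hb.1, h]

lemma lan_int (f : ℝ → ℝ) : ∫ k in Set.Ioo (0:ℝ) 1, f k
    = ∫ l in Set.Ioo (0:ℝ) 1, 2/(1 + l)^2 * f ((1 - l)/(1 + l)) := by
  conv_lhs => rw [← lan_image]
  rw [integral_image_eq_integral_abs_deriv_smul measurableSet_Ioo
    (fun x hx => (lan_deriv hx).hasDerivWithinAt) lan_inj]
  refine setIntegral_congr_fun measurableSet_Ioo fun x hx => ?_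
  have h : 0 < 1 + x := by linarith [hx.1]
  simp only [smul_eq_mul]
  rw [show -2/(1+x)^2 = -(2/(1+x)^2) by ring, abs_neg, abs_of_pos (by positivity)]

lemma lan_integrable (f : ℝ → ℝ) : IntegrableOn f (Set.Ioo 0 1) ↔
    IntegrableOn (fun l => 2/(1 + l)^2 * f ((1 - l)/(1 + l))) (Set.Ioo 0 1) := by
  conv_lhs => rw [← lan_image]
  rw [integrableOn_image_iff_integrableOn_abs_deriv_smul measurableSet_Ioo
    (fun x hx => (lan_deriv hx).hasDerivWithinAt) lan_inj]
  refine integrableOn_congr_fun (fun x hx => ?_) measurableSet_Ioo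
  have h : 0 < 1 + x := by linarith [hx.1]
  simp only [smul_eq_mul]
  rw [show -2/(1+x)^2 = -(2/(1+x)^2) by ring, abs_neg, abs_of_pos (by positivity)]

lemma sq_mem {l : ℝ} (hl : l ∈ Set.Ioo (0:ℝ) 1) : Real.sqrt (1 - l^2) ∈ Set.Ioo (0:ℝ) 1 := by
  have h0 := hl.1; have h1 := hl.2
  refine ⟨Real.sqrt_pos.2 (by nlinarith), ?_⟩
  rw [Real.sqrt_lt' one_pos]; nlinarith

lemma sq_invol {l : ℝ} (hl : l ∈ Set.Ioo (0:ℝ) 1) : Real.sqrt (1 - Real.sqrt (1 - l^2)^2) = l := by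
  have h0 := hl.1; have h1 := hl.2
  rw [Real.sq_sqrt (by nlinarith), show 1 - (1 - l^2) = l^2 by ring, Real.sqrt_sq h0.le]

lemma sq_deriv {l : ℝ} (hl : l ∈ Set.Ioo (0:ℝ) 1) :
    HasDerivAt (fun l : ℝ => Real.sqrt (1 - l^2)) (-(l / Real.sqrt (1 - l^2))) l := by
  have h0 := hl.1; have h1 := hl.2
  have h : 1 - l^2 ≠ 0 := by nlinarith
  have := (((hasDerivAt_id l).pow 2).const_sub 1).sqrt h
  refine this.congr_deriv ?_
  have := (sq_mem hl).1
  simp only [id, Pi.pow_apply]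
  norm_num
  field_simp

lemma sq_int (f : ℝ → ℝ) : ∫ k in Set.Ioo (0:ℝ) 1, f k
    = ∫ l in Set.Ioo (0:ℝ) 1, l / Real.sqrt (1 - l^2) * f (Real.sqrt (1 - l^2)) := by
  have im : (fun l : ℝ => Real.sqrt (1 - l^2)) '' Set.Ioo 0 1 = Set.Ioo 0 1 := by
    ext y; constructor
    · rintro ⟨l, hl, rfl⟩; exact sq_mem hl
    · intro hy; exact ⟨_, sq_mem hy, sq_invol hy⟩
  have inj : Set.InjOn (fun l : ℝ => Real.sqrt (1 - l^2)) (Set.Ioo 0 1) := by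
    intro a ha b hb h
    simp only at h
    rw [← sq_invol ha, ← sq_invol hb, h]
  conv_lhs => rw [← im]
  rw [integral_image_eq_integral_abs_deriv_smul measurableSet_Ioo
    (fun x hx => (sq_deriv hx).hasDerivWithinAt) inj]
  refine setIntegral_congr_fun measurableSet_Ioo fun x hx => ?_
  have h := (sq_mem hx).1
  have h' := hx.1
  simp only [smul_eq_mul]
  rw [abs_neg, abs_of_pos (by positivity)]

lemma UK_lan {l : ℝ} (hl : l ∈ Set.Ioo (0:ℝ) 1) : UK ((1 - l)/(1 + l)) = (1 + l)/2 * JR l := by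
  have h := lan_mem hl
  have := landen h.1 h.2
  rw [lan_invol hl.1] at this
  rw [this]; unfold UK
  have h3 : 0 < 1 + l := by linarith [hl.1]
  field_simp; ring

lemma JR_lan {l : ℝ} (hl : l ∈ Set.Ioo (0:ℝ) 1) : JR ((1 - l)/(1 + l)) = (1 + l) * UK l :=
  landen hl.1 hl.2

lemma UK_sq {l : ℝ} (hl : l ∈ Set.Ioo (0:ℝ) 1) : UK (Real.sqrt (1 - l^2)) = JR l := by
  unfold UK; rw [sq_invol hl]

lemma integ_UK3 (h3 : IntegrableOn (fun k => JR k^3) (Set.Ioo 0 1)) :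
    IntegrableOn (fun k => UK k^3) (Set.Ioo 0 1) := by
  rw [lan_integrable] at h3
  refine Integrable.mono' h3 ((UK_meas.pow_const 3).aestronglyMeasurable) ?_
  refine (ae_restrict_iff' measurableSet_Ioo).2 (Eventually.of_forall fun l hl => ?_)
  have hu := UK_nonneg l
  have : 0 < 1 + l := by linarith [hl.1]
  rw [Real.norm_of_nonneg (by positivity), JR_lan hl]
  have : 2/(1 + l)^2 * ((1 + l) * UK l)^3 = 2 * (1 + l) * UK l^3 := by field_simp
  rw [this]
  have : 0 ≤ UK l^3 := by positivity
  nlinarith [hl.1]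

lemma integ_mix (h3 : IntegrableOn (fun k => JR k^3) (Set.Ioo 0 1)) (g : ℝ → ℝ) (hg : Measurable g)
    (hb : ∀ k ∈ Set.Ioo (0:ℝ) 1, 0 ≤ g k ∧ g k ≤ UK k^3 + JR k^3) : IntegrableOn g (Set.Ioo 0 1) := by
  refine Integrable.mono' ((integ_UK3 h3).add h3) hg.aestronglyMeasurable ?_
  refine (ae_restrict_iff' measurableSet_Ioo).2 (Eventually.of_forall fun l hl => ?_)
  rw [Real.norm_of_nonneg (hb l hl).1]; exact (hb l hl).2

lemma mix_le {a b : ℝ} (ha : 0 ≤ a) (hb : 0 ≤ b) : a^2 * b ≤ a^3 + b^3 := by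
  rcases le_total a b with h | h
  · have : a^2 * b ≤ b^2 * b := by gcongr
    nlinarith [pow_nonneg ha 3]
  · have : a^2 * b ≤ a^2 * a := by gcongr
    nlinarith [pow_nonneg hb 3]

lemma ell_to (F : ℝ → ℝ → ℝ → ℝ) :
    ∫ k in (0:ℝ)..1, F k (ellipticK k) (ellipticK (Real.sqrt (1 - k^2)))
     = ∫ k in Set.Ioo (0:ℝ) 1, F k (UK k) (JR k) := by
  rw [intervalIntegral.integral_of_le zero_le_one, integral_Ioc_eq_integral_Ioo]
  refine setIntegral_congr_fun measurableSet_Ioo fun k hk => ?_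
  have h0 := hk.1; have h1 := hk.2
  have e1 : ellipticK k = UK k := ellipticK_eq (by rw [Real.sq_sqrt (by nlinarith)]; ring)
  have e2 : ellipticK (Real.sqrt (1 - k^2)) = JR k := ellipticK_eq (by rw [Real.sq_sqrt (by nlinarith)])
  simp only [e1, e2]

lemma final_assembly {A : ℝ} (h3 : IntegrableOn (fun k => JR k^3) (Set.Ioo 0 1))
    (hA : ∫ k in Set.Ioo (0:ℝ) 1, JR k^3 = A)
    (hC : ∫ k in Set.Ioo (0:ℝ) 1, (JR k^3 - 3 * (JR k * UK k^2)) = 0) :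
    (∫ k in (0:ℝ)..1, (ellipticK (Real.sqrt (1-k^2)))^3) = A ∧
    (10/3) * (∫ k in (0:ℝ)..1, (ellipticK k)^3) = A ∧
    5 * (∫ k in (0:ℝ)..1, (ellipticK k)^3 * k) = A ∧
    3 * (∫ k in (0:ℝ)..1, (ellipticK k)^2 * ellipticK (Real.sqrt (1-k^2))) = A ∧
    2 * (∫ k in (0:ℝ)..1, ellipticK k * (ellipticK (Real.sqrt (1-k^2)))^2) = A ∧
    6 * (∫ k in (0:ℝ)..1, (ellipticK k)^2 * ellipticK (Real.sqrt (1-k^2)) * k) = A := by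
  rw [ell_to (fun k u w => w^3), ell_to (fun k u w => u^3), ell_to (fun k u w => u^3 * k),
    ell_to (fun k u w => u^2 * w), ell_to (fun k u w => u * w^2), ell_to (fun k u w => u^2 * w * k)]
  have mU := UK_meas
  have mJ := JR_meas
  have key : ∀ k ∈ Set.Ioo (0:ℝ) 1, 0 ≤ UK k ∧ 0 ≤ JR k ∧ 0 < k ∧ k < 1 := fun k hk =>
    ⟨UK_nonneg k, JR_nonneg k, hk.1, hk.2⟩
  have red : ∀ {x k y : ℝ}, 0 ≤ x → 0 < k → k < 1 → x ≤ y → 0 ≤ x * k ∧ x * k ≤ y := by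
    intro x k y hx h0 h1 hxy
    exact ⟨by positivity, by nlinarith⟩
  have i1 : IntegrableOn (fun k => UK k^3) (Set.Ioo 0 1) := integ_UK3 h3
  have i2 : IntegrableOn (fun k => UK k^3 * k) (Set.Ioo 0 1) := by
    refine integ_mix h3 _ (by fun_prop) fun k hk => ?_
    obtain ⟨hu, hw, h0, h1⟩ := key k hk
    exact red (by positivity) h0 h1 (by linarith [pow_nonneg hw 3])
  have i2' : IntegrableOn (fun k => JR k^3 * k) (Set.Ioo 0 1) := by
    refine integ_mix h3 _ (by fun_prop) fun k hk => ?_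
    obtain ⟨hu, hw, h0, h1⟩ := key k hk
    exact red (by positivity) h0 h1 (by linarith [pow_nonneg hu 3])
  have i3 : IntegrableOn (fun k => UK k^2 * JR k) (Set.Ioo 0 1) := by
    refine integ_mix h3 _ (by fun_prop) fun k hk => ?_
    obtain ⟨hu, hw, h0, h1⟩ := key k hk
    exact ⟨by positivity, mix_le hu hw⟩
  have i4 : IntegrableOn (fun k => UK k * JR k^2) (Set.Ioo 0 1) := by
    refine integ_mix h3 _ (by fun_prop) fun k hk => ?_
    obtain ⟨hu, hw, h0, h1⟩ := key k hk
    exact ⟨by positivity, by linarith [mix_le hw hu]⟩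
  have i5 : IntegrableOn (fun k => UK k^2 * JR k * k) (Set.Ioo 0 1) := by
    refine integ_mix h3 _ (by fun_prop) fun k hk => ?_
    obtain ⟨hu, hw, h0, h1⟩ := key k hk
    exact red (by positivity) h0 h1 (mix_le hu hw)
  have i6 : IntegrableOn (fun k => UK k * JR k^2 * k) (Set.Ioo 0 1) := by
    refine integ_mix h3 _ (by fun_prop) fun k hk => ?_
    obtain ⟨hu, hw, h0, h1⟩ := key k hk
    exact red (by positivity) h0 h1 (by linarith [mix_le hw hu])
  -- Landen relations
  have r1 : ∫ k in Set.Ioo (0:ℝ) 1, JR k^3 = 2 * ((∫ k in Set.Ioo (0:ℝ) 1, UK k^3) + ∫ k in Set.Ioo (0:ℝ) 1, UK k^3 * k) := by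
    rw [← integral_add i1 i2, ← MeasureTheory.integral_const_mul, lan_int]
    refine setIntegral_congr_fun measurableSet_Ioo fun l hl => ?_
    have : 0 < 1 + l := by linarith [hl.1]
    simp only [JR_lan hl]; field_simp
  have r2 : ∫ k in Set.Ioo (0:ℝ) 1, UK k^3 = 1/4 * ((∫ k in Set.Ioo (0:ℝ) 1, JR k^3) + ∫ k in Set.Ioo (0:ℝ) 1, JR k^3 * k) := by
    rw [← integral_add h3 i2', ← MeasureTheory.integral_const_mul, lan_int]
    refine setIntegral_congr_fun measurableSet_Ioo fun l hl => ?_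
    have : 0 < 1 + l := by linarith [hl.1]
    simp only [UK_lan hl]; field_simp; ring
  have r3 : ∫ k in Set.Ioo (0:ℝ) 1, UK k^2 * JR k = 1/2 * ((∫ k in Set.Ioo (0:ℝ) 1, UK k * JR k^2) + ∫ k in Set.Ioo (0:ℝ) 1, UK k * JR k^2 * k) := by
    rw [← integral_add i4 i6, ← MeasureTheory.integral_const_mul, lan_int]
    refine setIntegral_congr_fun measurableSet_Ioo fun l hl => ?_
    have : 0 < 1 + l := by linarith [hl.1]
    simp only [UK_lan hl, JR_lan hl]; field_simp
  have r4 : ∫ k in Set.Ioo (0:ℝ) 1, UK k * JR k^2 = ((∫ k in Set.Ioo (0:ℝ) 1, UK k^2 * JR k) + ∫ k in Set.Ioo (0:ℝ) 1, UK k^2 * JR k * k) := by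
    rw [← integral_add i3 i5, lan_int]
    refine setIntegral_congr_fun measurableSet_Ioo fun l hl => ?_
    have : 0 < 1 + l := by linarith [hl.1]
    simp only [UK_lan hl, JR_lan hl]; field_simp
  have r5 : ∫ k in Set.Ioo (0:ℝ) 1, UK k^3 * k = ∫ k in Set.Ioo (0:ℝ) 1, JR k^3 * k := by
    rw [sq_int]
    refine setIntegral_congr_fun measurableSet_Ioo fun l hl => ?_
    have : 0 < Real.sqrt (1 - l^2) := (sq_mem hl).1
    simp only [UK_sq hl]; field_simp
  have r6 : ∫ k in Set.Ioo (0:ℝ) 1, UK k^2 * JR k * k = ∫ k in Set.Ioo (0:ℝ) 1, UK k * JR k^2 * k := by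
    rw [sq_int]
    refine setIntegral_congr_fun measurableSet_Ioo fun l hl => ?_
    have : 0 < Real.sqrt (1 - l^2) := (sq_mem hl).1
    simp only [UK_sq hl]
    rw [show JR (Real.sqrt (1 - l^2)) = UK l from rfl]; field_simp
  have r7 : (∫ k in Set.Ioo (0:ℝ) 1, JR k^3) = 3 * ∫ k in Set.Ioo (0:ℝ) 1, UK k^2 * JR k := by
    rw [integral_sub h3 ((i3.const_mul 3).congr (Eventually.of_forall fun k => by simp only; ring)),
      MeasureTheory.integral_const_mul] at hC
    have : ∫ k in Set.Ioo (0:ℝ) 1, JR k * UK k^2 = ∫ k in Set.Ioo (0:ℝ) 1, UK k^2 * JR k := by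
      congr 1; ext k; ring
    linarith
  rw [hA] at *
  refine ⟨rfl, ?_, ?_, ?_, ?_, ?_⟩ <;> linarith

lemma li_scale_Ioi (f : ℝ → ENNReal) {a : ℝ} (ha : 0 < a) :
    ∫⁻ s in Set.Ioi (0:ℝ), f s = ENNReal.ofReal a * ∫⁻ s in Set.Ioi (0:ℝ), f (a * s) := by
  have im : (fun s : ℝ => a * s) '' Set.Ioi 0 = Set.Ioi 0 := by
    ext y; constructor
    · rintro ⟨s, hs, rfl⟩; exact mul_pos ha hs
    · intro hy; exact ⟨y / a, div_pos hy ha, by field_simp⟩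
  conv_lhs => rw [← im]
  rw [lintegral_image_eq_lintegral_abs_deriv_mul (f' := fun _ => a) measurableSet_Ioi
    (fun x hx => by simpa using ((hasDerivAt_id x).const_mul a).hasDerivWithinAt)
    (fun x _ y _ h => mul_left_cancel₀ ha.ne' h), abs_of_pos ha,
    lintegral_const_mul' _ _ ENNReal.ofReal_ne_top]

lemma li_scale_univ (f : ℝ → ENNReal) {a : ℝ} (ha : 0 < a) :
    ∫⁻ s, f s = ENNReal.ofReal a * ∫⁻ s, f (a * s) := by
  have im : (fun s : ℝ => a * s) '' Set.univ = Set.univ := by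
    refine Set.eq_univ_of_forall fun y => ⟨y / a, trivial, by simp only; field_simp⟩
  conv_lhs => rw [← setLIntegral_univ, ← im]
  rw [lintegral_image_eq_lintegral_abs_deriv_mul (f' := fun _ => a) MeasurableSet.univ
    (fun x hx => by simpa using ((hasDerivAt_id x).const_mul a))
    (fun x _ y _ h => mul_left_cancel₀ ha.ne' h), abs_of_pos ha,
    lintegral_const_mul' _ _ ENNReal.ofReal_ne_top, setLIntegral_univ]

lemma li_even (f : ℝ → ENNReal) :
    ∫⁻ x, f |x| = 2 * ∫⁻ x in Set.Ioi (0:ℝ), f x := by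
  have h1 : ∫⁻ x in Set.Ioi (0:ℝ), f |x| = ∫⁻ x in Set.Ioi (0:ℝ), f x :=
    setLIntegral_congr_fun measurableSet_Ioi fun x hx => by rw [abs_of_pos hx]
  have h2 : ∫⁻ x in Set.Iio (0:ℝ), f |x| = ∫⁻ x in Set.Ioi (0:ℝ), f x := by
    have im : (fun s : ℝ => -s) '' Set.Ioi 0 = Set.Iio 0 := by simp
    rw [← im, lintegral_image_eq_lintegral_abs_deriv_mul (f' := fun _ => -1) measurableSet_Ioi
      (fun x hx => (hasDerivAt_neg x).hasDerivWithinAt) (fun x _ y _ h => neg_injective h)]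
    rw [← h1]; simp
  have h3 := lintegral_add_compl (μ := volume) (fun x => f |x|) (measurableSet_Ioi (a := (0:ℝ)))
  rw [← h3, Set.compl_Ioi, setLIntegral_congr Iio_ae_eq_Iic.symm, h1, h2, two_mul]

lemma li_inv_univ : ∫⁻ x : ℝ, ENNReal.ofReal (1 / (1 + x^2)) = ENNReal.ofReal π := by
  rw [← integral_univ_inv_one_add_sq, ofReal_integral_eq_lintegral_ofReal integrable_inv_one_add_sq
    (Eventually.of_forall fun x => by positivity)]
  simp only [one_div]

lemma li_inv_Ioi : ∫⁻ x in Set.Ioi (0:ℝ), ENNReal.ofReal (1 / (1 + x^2)) = ENNReal.ofReal (π/2) := by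
  have h := integral_Ioi_inv_one_add_sq (i := 0)
  rw [Real.arctan_zero, sub_zero] at h
  rw [← h, ofReal_integral_eq_lintegral_ofReal integrable_inv_one_add_sq.integrableOn
    (Eventually.of_forall fun x => by positivity)]
  simp only [one_div]

lemma feyn {A B : ℝ} (hA : 0 < A) (hB : 0 < B) :
    ∫⁻ s in Set.Ioi (0:ℝ), ENNReal.ofReal (1 / (B + s^2 * A)) = ENNReal.ofReal (π / 2 / Real.sqrt (A * B)) := by
  have h : 0 < Real.sqrt (B / A) := Real.sqrt_pos.2 (by positivity)
  rw [li_scale_Ioi _ h]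
  have : ∀ s : ℝ, ENNReal.ofReal (1 / (B + (Real.sqrt (B/A) * s)^2 * A))
      = ENNReal.ofReal (1/B) * ENNReal.ofReal (1 / (1 + s^2)) := by
    intro s
    rw [← ENNReal.ofReal_mul (by positivity), mul_pow, Real.sq_sqrt (by positivity)]
    congr 1; field_simp
  simp_rw [this]
  rw [lintegral_const_mul' _ _ ENNReal.ofReal_ne_top, li_inv_Ioi, ← ENNReal.ofReal_mul (by positivity),
    ← ENNReal.ofReal_mul (by positivity)]
  congr 1
  rw [Real.sqrt_div hB.le, Real.sqrt_mul hA.le]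
  have a1 := Real.sqrt_pos.2 hA
  have b1 := Real.sqrt_pos.2 hB
  have b2 := Real.sq_sqrt hB.le
  field_simp
  exact b2

lemma quad_int {α γ : ℝ} (β : ℝ) (hA : 0 < α) (hB : 0 < γ) :
    ∫⁻ x : ℝ, ENNReal.ofReal (1 / (γ + α * (x - β)^2)) = ENNReal.ofReal (π / Real.sqrt (α * γ)) := by
  rw [lintegral_sub_right_eq_self (fun x => ENNReal.ofReal (1 / (γ + α * x^2))) β]
  have h : 0 < Real.sqrt (γ / α) := Real.sqrt_pos.2 (by positivity)
  rw [li_scale_univ _ h]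
  have : ∀ s : ℝ, ENNReal.ofReal (1 / (γ + α * (Real.sqrt (γ/α) * s)^2))
      = ENNReal.ofReal (1/γ) * ENNReal.ofReal (1 / (1 + s^2)) := by
    intro s
    rw [← ENNReal.ofReal_mul (by positivity), mul_pow, Real.sq_sqrt (by positivity)]
    congr 1; field_simp
  simp_rw [this]
  rw [lintegral_const_mul' _ _ ENNReal.ofReal_ne_top, li_inv_univ, ← ENNReal.ofReal_mul (by positivity),
    ← ENNReal.ofReal_mul (by positivity)]
  congr 1
  rw [Real.sqrt_div hB.le, Real.sqrt_mul hA.le]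
  have a1 := Real.sqrt_pos.2 hA
  have b1 := Real.sqrt_pos.2 hB
  have b2 := Real.sq_sqrt hB.le
  field_simp
  exact b2

lemma lemF (b1 b2 : ℝ) {y1 y2 : ℝ} (h1 : 0 < y1) (h2 : 0 < y2) :
    ∫⁻ x : ℝ, ENNReal.ofReal (1 / Real.sqrt (((x - b1)^2 + y1^2) * ((x - b2)^2 + y2^2)))
     = ∫⁻ s in Set.Ioi (0:ℝ), ENNReal.ofReal (2 / Real.sqrt (s^2 * (b1 - b2)^2 + (1 + s^2) * (s^2 * y1^2 + y2^2))) := by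
  have e1 : ∀ x : ℝ, ENNReal.ofReal (1 / Real.sqrt (((x - b1)^2 + y1^2) * ((x - b2)^2 + y2^2)))
     = ENNReal.ofReal (2/π) * ∫⁻ s in Set.Ioi (0:ℝ), ENNReal.ofReal (1 / (((x - b2)^2 + y2^2) + s^2 * ((x - b1)^2 + y1^2))) := by
    intro x
    rw [feyn (by positivity) (by positivity), ← ENNReal.ofReal_mul (by positivity)]
    congr 1
    have := Real.pi_pos
    field_simp
  simp_rw [e1]
  rw [lintegral_const_mul' _ _ ENNReal.ofReal_ne_top, lintegral_lintegral_swap,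
    ← lintegral_const_mul' _ _ ENNReal.ofReal_ne_top]
  · refine setLIntegral_congr_fun measurableSet_Ioi fun s hs => ?_
    have e2 : ∀ x : ℝ, ((x - b2)^2 + y2^2) + s^2 * ((x - b1)^2 + y1^2)
       = (s^2 * (b1 - b2)^2/(1 + s^2) + s^2 * y1^2 + y2^2) + (1 + s^2) * (x - (s^2 * b1 + b2)/(1 + s^2))^2 := by
      intro x
      have : 1 + s^2 ≠ 0 := by positivity
      field_simp; ring
    simp only [e2]
    rw [quad_int _ (by positivity) (by positivity), ← ENNReal.ofReal_mul (by positivity)]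
    have e3 : (1 + s^2) * (s^2 * (b1 - b2)^2/(1 + s^2) + s^2 * y1^2 + y2^2)
      = s^2 * (b1 - b2)^2 + (1 + s^2) * (s^2 * y1^2 + y2^2) := by
      have : 1 + s^2 ≠ 0 := by positivity
      field_simp; ring
    rw [e3]
    congr 1
    have := Real.pi_pos
    field_simp
  · apply Measurable.aemeasurable
    unfold Function.uncurry
    fun_prop

noncomputable def GG : ENNReal := ∫⁻ u in Set.Ioi (0:ℝ), ENNReal.ofReal (1 / Real.sqrt (u * (1 + u^2)))

lemma lemG {α β : ℝ} (ha : 0 < α) (hb : 0 < β) :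
    ∫⁻ y in Set.Ioi (0:ℝ), ENNReal.ofReal (1 / Real.sqrt (y * (α^2 + β^2 * y^2)))
      = ENNReal.ofReal (1 / Real.sqrt (α * β)) * GG := by
  rw [li_scale_Ioi _ (div_pos ha hb)]
  have : ∀ s ∈ Set.Ioi (0:ℝ), ENNReal.ofReal (1 / Real.sqrt ((α/β * s) * (α^2 + β^2 * (α/β * s)^2)))
      = ENNReal.ofReal (1 / (Real.sqrt (α^3/β))) * ENNReal.ofReal (1 / Real.sqrt (s * (1 + s^2))) := by
    intro s hs
    have hs' : 0 < s := hs
    rw [← ENNReal.ofReal_mul (by positivity), one_div_mul_one_div, ← Real.sqrt_mul (by positivity)]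
    congr 3; field_simp
  rw [setLIntegral_congr_fun measurableSet_Ioi this, lintegral_const_mul' _ _ ENNReal.ofReal_ne_top, ← mul_assoc,
    ← ENNReal.ofReal_mul (by positivity)]
  congr 2
  have e : Real.sqrt (α^3/β) = α / β * Real.sqrt (α * β) := by
    rw [show α^3/β = (α/β)^2 * (α * β) by field_simp, Real.sqrt_mul (by positivity), Real.sqrt_sq (by positivity)]
  rw [e]
  have : 0 < Real.sqrt (α * β) := Real.sqrt_pos.2 (by positivity)
  field_simp

lemma GG_eq : GG = ENNReal.ofReal (Real.Gamma (1/4)^2 / (2 * Real.sqrt π)) := by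
  have h := ProbabilityTheory.lintegral_betaPDF_eq_one (α := 1/4) (β := 1/4) (by norm_num) (by norm_num)
  rw [ProbabilityTheory.lintegral_betaPDF] at h
  have hbp := ProbabilityTheory.beta_pos (α := 1/4) (β := 1/4) (by norm_num) (by norm_num)
  have hbe : ProbabilityTheory.beta (1/4) (1/4) = Real.Gamma (1/4)^2 / Real.sqrt π := by
    unfold ProbabilityTheory.beta
    rw [show (1/4 + 1/4 : ℝ) = 1/2 by norm_num, Real.Gamma_one_half_eq]; ring
  set b := ProbabilityTheory.beta (1/4) (1/4) with hb
  have im : (fun u : ℝ => u^2/(1 + u^2)) '' Set.Ioi 0 = Set.Ioo 0 1 := by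
    ext y; constructor
    · rintro ⟨s, hs, rfl⟩
      have hs' : 0 < s := hs
      exact ⟨by positivity, by rw [div_lt_one (by positivity)]; linarith⟩
    · intro hy
      have hy0 := hy.1
      have hy1 : 0 < 1 - y := by linarith [hy.2]
      refine ⟨Real.sqrt (y/(1-y)), Real.sqrt_pos.2 (by positivity), ?_⟩
      simp only
      rw [Real.sq_sqrt (by positivity)]; field_simp; ring
  have inj : Set.InjOn (fun u : ℝ => u^2/(1 + u^2)) (Set.Ioi 0) := by
    intro s hs t ht h
    have hs' : 0 < s := hs
    have ht' : 0 < t := ht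
    simp only at h
    rw [div_eq_div_iff (by positivity) (by positivity)] at h
    have : s^2 = t^2 := by linarith
    exact (pow_left_inj₀ hs'.le ht'.le two_ne_zero).1 this
  rw [← im, lintegral_image_eq_lintegral_abs_deriv_mul (f' := fun u => 2*u/(1 + u^2)^2) measurableSet_Ioi
    (fun x hx => by
      have := ((hasDerivAt_id x).pow 2).div (((hasDerivAt_id x).pow 2).const_add 1) (by simp only [Pi.pow_apply, id]; positivity)
      exact (this.congr_deriv (by simp only [Pi.pow_apply, id]; norm_num; ring)).hasDerivWithinAt) inj] at h
  have e : ∀ u ∈ Set.Ioi (0:ℝ), ENNReal.ofReal |2*u/(1 + u^2)^2| *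
      ENNReal.ofReal (1 / b * (u^2/(1 + u^2)) ^ ((1/4:ℝ) - 1) * (1 - u^2/(1 + u^2)) ^ ((1/4:ℝ) - 1))
      = ENNReal.ofReal (2/b) * ENNReal.ofReal (1 / Real.sqrt (u * (1 + u^2))) := by
    intro u hu
    have hu' : 0 < u := hu
    rw [abs_of_pos (by positivity), ← ENNReal.ofReal_mul (by positivity), ← ENNReal.ofReal_mul (by positivity)]
    congr 1
    have hq : 0 < 1 + u^2 := by positivity
    have e1 : 1 - u^2/(1 + u^2) = 1/(1 + u^2) := by field_simp; ring
    rw [e1, mul_assoc (1/b), ← Real.mul_rpow (by positivity) (by positivity)]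
    have e2 : u^2/(1 + u^2) * (1/(1 + u^2)) = (u/(1+u^2))^2 := by field_simp
    have e4 : ((u/(1+u^2))^2) ^ ((1/4:ℝ) - 1) = (u/(1+u^2)) ^ (-(3/2):ℝ) := by
      rw [← Real.rpow_natCast, ← Real.rpow_mul (by positivity)]
      norm_num
    rw [e2, e4]
    rw [show (-(3/2):ℝ) = -1 - 1/2 by norm_num, Real.rpow_sub (by positivity), Real.rpow_neg_one, ← Real.sqrt_eq_rpow,
      Real.sqrt_div hu'.le, Real.sqrt_mul hu'.le]
    have := Real.sqrt_pos.2 hu'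
    have := Real.sqrt_pos.2 hq
    have := Real.sq_sqrt hq.le
    field_simp
    nlinarith
  rw [setLIntegral_congr_fun measurableSet_Ioi e, lintegral_const_mul' _ _ ENNReal.ofReal_ne_top] at h
  change _ * GG = 1 at h
  have hb2 : ENNReal.ofReal (Real.Gamma (1/4)^2 / (2 * Real.sqrt π)) * ENNReal.ofReal (2/b) = 1 := by
    rw [← ENNReal.ofReal_mul (by positivity), hbe, ENNReal.ofReal_eq_one]
    have := Real.sqrt_pos.2 Real.pi_pos
    have := Real.Gamma_pos_of_pos (show (0:ℝ) < 1/4 by norm_num)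
    field_simp
  calc GG = (ENNReal.ofReal (Real.Gamma (1/4)^2 / (2 * Real.sqrt π)) * ENNReal.ofReal (2/b)) * GG := by rw [hb2, one_mul]
    _ = _ := by rw [mul_assoc, h, mul_one]

noncomputable def eE (x y b : ℝ) : ENNReal := ENNReal.ofReal (1 / Real.sqrt ((x - b)^2 + y^2))
noncomputable def wE (b : ℝ) : ENNReal := ENNReal.ofReal (1 / Real.sqrt (b^2 + 1))
noncomputable def PhiE (x y : ℝ) : ENNReal := ∫⁻ b, eE x y b * wE b

noncomputable def TT : ENNReal :=
  ∫⁻ z : ℝ × ℝ, ENNReal.ofReal (1 / Real.sqrt z.1) * PhiE z.2 z.1 ^ 2 ∂((volume.restrict (Set.Ioi 0)).prod volume)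

lemma eE_meas : Measurable (fun p : (ℝ × ℝ) × ℝ => eE p.1.2 p.1.1 p.2) := by unfold eE; fun_prop
lemma wE_meas : Measurable wE := by unfold wE; fun_prop

lemma mulofReal (a b : ℝ) (ha : 0 ≤ a) : ENNReal.ofReal (1 / Real.sqrt a) * ENNReal.ofReal (1 / Real.sqrt b)
    = ENNReal.ofReal (1 / Real.sqrt (a * b)) := by
  rw [← ENNReal.ofReal_mul (by positivity), one_div_mul_one_div, ← Real.sqrt_mul ha]

lemma two_ofReal (a : ℝ) : ENNReal.ofReal (2 / a) = 2 * ENNReal.ofReal (1 / a) := by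
  rw [show (2:ENNReal) = ENNReal.ofReal 2 by simp, ← ENNReal.ofReal_mul (by norm_num)]
  congr 1; ring

/-- the inner integral over the half plane -/
lemma inner_half {b1 b2 : ℝ} (h : b1 ≠ b2) :
    ∫⁻ y in Set.Ioi (0:ℝ), ∫⁻ x, ENNReal.ofReal (1 / Real.sqrt y) * (eE x y b1 * eE x y b2)
     = 2 * GG^2 * ENNReal.ofReal (1 / Real.sqrt |b1 - b2|) := by
  have hd : 0 < |b1 - b2| := abs_pos.2 (sub_ne_zero.2 h)
  have e1 : ∀ y ∈ Set.Ioi (0:ℝ), ∫⁻ x, ENNReal.ofReal (1 / Real.sqrt y) * (eE x y b1 * eE x y b2)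
     = ∫⁻ s in Set.Ioi (0:ℝ), 2 * ENNReal.ofReal (1 / Real.sqrt (y * ((s * |b1 - b2|)^2 + (1 + s^2)^2 * y^2))) := by
    intro y hy
    have hy' : 0 < y := hy
    rw [lintegral_const_mul' _ _ ENNReal.ofReal_ne_top]
    unfold eE
    have : ∀ x : ℝ, ENNReal.ofReal (1 / Real.sqrt ((x - b1)^2 + y^2)) * ENNReal.ofReal (1 / Real.sqrt ((x - b2)^2 + y^2))
      = ENNReal.ofReal (1 / Real.sqrt (((x - b1)^2 + y^2) * ((x - b2)^2 + y^2))) := fun x =>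
      mulofReal _ _ (by positivity)
    simp_rw [this]
    rw [lemF _ _ hy' hy', ← lintegral_const_mul' _ _ ENNReal.ofReal_ne_top]
    refine setLIntegral_congr_fun measurableSet_Ioi fun s hs => ?_
    rw [two_ofReal, mul_left_comm, mulofReal _ _ hy'.le]
    congr 5
    rw [mul_pow, sq_abs]; ring
  rw [setLIntegral_congr_fun measurableSet_Ioi e1, lintegral_lintegral_swap]
  · have e2 : ∀ s ∈ Set.Ioi (0:ℝ), ∫⁻ y in Set.Ioi (0:ℝ), 2 * ENNReal.ofReal (1 / Real.sqrt (y * ((s * |b1 - b2|)^2 + (1 + s^2)^2 * y^2)))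
       = 2 * GG * ENNReal.ofReal (1 / Real.sqrt |b1 - b2|) * ENNReal.ofReal (1 / Real.sqrt (s * (1 + s^2))) := by
      intro s hs
      have hs' : 0 < s := hs
      rw [lintegral_const_mul' _ _ (by simp), lemG (by positivity) (by positivity), mul_assoc _ (ENNReal.ofReal _) (ENNReal.ofReal _),
        mulofReal _ _ hd.le, show s * |b1 - b2| * (1 + s^2) = |b1 - b2| * (s * (1 + s^2)) by ring]
      ring
    have hG : GG ≠ ⊤ := by rw [GG_eq]; exact ENNReal.ofReal_ne_top
    rw [setLIntegral_congr_fun measurableSet_Ioi e2, lintegral_const_mul']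
    · change _ * GG = _
      ring
    · exact ENNReal.mul_ne_top (ENNReal.mul_ne_top (by simp) hG) ENNReal.ofReal_ne_top
  · apply Measurable.aemeasurable
    unfold Function.uncurry
    fun_prop

/-- the integral over two boundary points -/
lemma outer_pts :
    ∫⁻ b1, ∫⁻ b2, wE b1 * wE b2 * ENNReal.ofReal (1 / Real.sqrt |b1 - b2|) = 4 * GG^2 := by
  have e1 : ∀ b1 : ℝ, ∫⁻ b2, wE b1 * wE b2 * ENNReal.ofReal (1 / Real.sqrt |b1 - b2|)
     = ∫⁻ u, wE b1 * wE (b1 + u) * ENNReal.ofReal (1 / Real.sqrt |u|) := by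
    intro b1
    rw [← lintegral_add_left_eq_self (fun b2 => wE b1 * wE b2 * ENNReal.ofReal (1 / Real.sqrt |b1 - b2|)) b1]
    refine lintegral_congr fun u => ?_
    rw [show b1 - (b1 + u) = -u by ring, abs_neg]
  simp_rw [e1]
  have hw := wE_meas
  rw [lintegral_lintegral_swap]
  · have e2 : ∀ u : ℝ, ∫⁻ b1, wE b1 * wE (b1 + u) * ENNReal.ofReal (1 / Real.sqrt |u|)
      = ∫⁻ s in Set.Ioi (0:ℝ), 2 * ENNReal.ofReal (1 / Real.sqrt (|u| * ((1 + s^2)^2 + s^2 * |u|^2))) := by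
      intro u
      rw [lintegral_mul_const' _ _ ENNReal.ofReal_ne_top]
      unfold wE
      have : ∀ x : ℝ, ENNReal.ofReal (1 / Real.sqrt (x^2 + 1)) * ENNReal.ofReal (1 / Real.sqrt ((x + u)^2 + 1))
        = ENNReal.ofReal (1 / Real.sqrt (((x - 0)^2 + 1^2) * ((x - (-u))^2 + 1^2))) := fun x => by
        rw [mulofReal _ _ (by positivity)]; simp
      simp_rw [this]
      rw [lemF _ _ one_pos one_pos, ← lintegral_mul_const' _ _ ENNReal.ofReal_ne_top]
      refine setLIntegral_congr_fun measurableSet_Ioi fun s hs => ?_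
      rw [two_ofReal, mul_assoc, mul_comm (ENNReal.ofReal _) (ENNReal.ofReal _), mulofReal _ _ (abs_nonneg u), sq_abs]
      congr 5; ring
    simp_rw [e2]
    rw [li_even (fun u => ∫⁻ s in Set.Ioi (0:ℝ), 2 * ENNReal.ofReal (1 / Real.sqrt (u * ((1 + s^2)^2 + s^2 * u^2)))),
      lintegral_lintegral_swap]
    · have e3 : ∀ s ∈ Set.Ioi (0:ℝ), ∫⁻ u in Set.Ioi (0:ℝ), 2 * ENNReal.ofReal (1 / Real.sqrt (u * ((1 + s^2)^2 + s^2 * u^2)))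
         = 2 * GG * ENNReal.ofReal (1 / Real.sqrt (s * (1 + s^2))) := by
        intro s hs
        have hs' : 0 < s := hs
        rw [lintegral_const_mul' _ _ (by simp), lemG (by positivity) hs', mul_assoc, mul_comm GG, mul_comm (1 + s^2) s]
      have hG : GG ≠ ⊤ := by rw [GG_eq]; exact ENNReal.ofReal_ne_top
      rw [setLIntegral_congr_fun measurableSet_Ioi e3, lintegral_const_mul']
      · change _ * (_ * GG) = _
        ring
      · exact ENNReal.mul_ne_top (by simp) hG
    · apply Measurable.aemeasurable
      unfold Function.uncurry
      fun_prop
  · apply Measurable.aemeasurable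
    unfold Function.uncurry
    fun_prop

lemma TT_eq : TT = 8 * GG^4 := by
  have hw := wE_meas
  have he := eE_meas
  have hG : GG ≠ ⊤ := by rw [GG_eq]; exact ENNReal.ofReal_ne_top
  have m1 : Measurable (fun p : (ℝ × ℝ) × (ℝ × ℝ) => eE p.1.2 p.1.1 p.2.1) := by unfold eE; fun_prop
  have m2 : Measurable (fun p : (ℝ × ℝ) × (ℝ × ℝ) => eE p.1.2 p.1.1 p.2.2) := by unfold eE; fun_prop
  have m3 : ∀ z : ℝ × ℝ, Measurable (fun b => eE z.2 z.1 b * wE b) := by intro z; unfold eE; fun_prop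
  have s1 : ∀ z : ℝ × ℝ, ENNReal.ofReal (1 / Real.sqrt z.1) * PhiE z.2 z.1 ^ 2
     = ∫⁻ b : ℝ × ℝ, wE b.1 * wE b.2 * (ENNReal.ofReal (1 / Real.sqrt z.1) * (eE z.2 z.1 b.1 * eE z.2 z.1 b.2)) := by
    intro z
    unfold PhiE
    rw [sq, ← lintegral_prod_mul (m3 z).aemeasurable (m3 z).aemeasurable, ← lintegral_const_mul' _ _ ENNReal.ofReal_ne_top,
      ← Measure.volume_eq_prod]
    refine lintegral_congr fun b => ?_
    ring
  unfold TT
  simp_rw [s1]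
  rw [lintegral_lintegral_swap]
  · have s2 : ∀ b : ℝ × ℝ, b.1 ≠ b.2 → ∫⁻ z : ℝ × ℝ, wE b.1 * wE b.2 * (ENNReal.ofReal (1 / Real.sqrt z.1) * (eE z.2 z.1 b.1 * eE z.2 z.1 b.2)) ∂((volume.restrict (Set.Ioi 0)).prod volume)
       = (2 * GG^2) * (wE b.1 * wE b.2 * ENNReal.ofReal (1 / Real.sqrt |b.1 - b.2|)) := by
      intro b hb
      rw [lintegral_const_mul', lintegral_prod, inner_half hb]
      · ring
      · apply Measurable.aemeasurable; unfold eE; fun_prop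
      · exact ENNReal.mul_ne_top ENNReal.ofReal_ne_top ENNReal.ofReal_ne_top
    have ae : ∀ᵐ b : ℝ × ℝ, b.1 ≠ b.2 := by
      rw [Measure.volume_eq_prod]
      refine (Measure.ae_prod_mem_iff_ae_ae_mem (s := {b : ℝ × ℝ | b.1 ≠ b.2}) ?_).2 ?_
      · exact (measurableSet_eq_fun measurable_fst measurable_snd).compl
      · refine Eventually.of_forall fun x => ?_
        have : ∀ᵐ y : ℝ, y ≠ x := by simp [ae_iff]
        filter_upwards [this] with y hy
        exact hy.symm
    rw [lintegral_congr_ae (ae.mono s2), lintegral_const_mul', Measure.volume_eq_prod, lintegral_prod, outer_pts]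
    · ring
    · apply Measurable.aemeasurable; fun_prop
    · exact ENNReal.mul_ne_top (by simp) (ENNReal.pow_ne_top hG)
  · apply Measurable.aemeasurable
    unfold Function.uncurry
    fun_prop

noncomputable def HE (w : ℝ) : ENNReal := ENNReal.ofReal ((1 / Real.sqrt w * JR (1 / Real.sqrt w))^2)

lemma HE_meas : Measurable HE := by
  have := JR_meas
  unfold HE; fun_prop

lemma N_lint {c : ℝ} (hc : 0 < c) (hc1 : c ≤ 1) :
    ∫⁻ s in Set.Ioi (0:ℝ), ENNReal.ofReal (1 / Real.sqrt (s^4 + (4/c^2 - 2) * s^2 + 1)) = ENNReal.ofReal (c * JR c) := by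
  rw [← N_eq hc]
  have h4 : 4 ≤ 4/c^2 := by
    rw [le_div_iff₀ (by positivity)]; nlinarith
  have hpos : ∀ s : ℝ, (1 + s^2)^2 ≤ s^4 + (4/c^2 - 2) * s^2 + 1 := fun s => by
    nlinarith [mul_nonneg (sub_nonneg.2 h4) (sq_nonneg s)]
  symm
  refine ofReal_integral_eq_lintegral_ofReal ?_ (Eventually.of_forall fun x => by positivity)
  refine Integrable.integrableOn ?_
  refine Integrable.mono' integrable_inv_one_add_sq (Measurable.aestronglyMeasurable (by fun_prop)) ?_
  refine Eventually.of_forall fun s => ?_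
  rw [Real.norm_of_nonneg (by positivity), one_div]
  refine inv_anti₀ (by positivity) ?_
  exact Real.le_sqrt_of_sq_le (hpos s)

lemma PhiE_eq (x : ℝ) {y : ℝ} (hy : 0 < y) :
    PhiE x y ^ 2 = ENNReal.ofReal (4 / y) * HE ((x^2 + (1+y)^2) / (4 * y)) := by
  set w := (x^2 + (1+y)^2) / (4 * y) with hw
  have hw0 : 0 < w := by positivity
  have hw1 : 1 ≤ w := by
    rw [hw, le_div_iff₀ (by positivity)]; nlinarith [sq_nonneg x, sq_nonneg (1 - y)]
  have hs : 1 ≤ Real.sqrt w := Real.one_le_sqrt.2 hw1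
  have hcsq : (1 / Real.sqrt w)^2 = 1 / w := by rw [div_pow, Real.sq_sqrt hw0.le, one_pow]
  have h1 : PhiE x y = ENNReal.ofReal (2 / Real.sqrt y * (1 / Real.sqrt w * JR (1 / Real.sqrt w))) := by
    unfold PhiE eE wE
    have : ∀ b : ℝ, ENNReal.ofReal (1 / Real.sqrt ((x - b)^2 + y^2)) * ENNReal.ofReal (1 / Real.sqrt (b^2 + 1))
       = ENNReal.ofReal (1 / Real.sqrt (((b - x)^2 + y^2) * ((b - 0)^2 + 1^2))) := fun b => by
      rw [mulofReal _ _ (by positivity)]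
      congr 3; ring
    simp_rw [this]
    have hsy := Real.sqrt_pos.2 hy
    have hyy := Real.sq_sqrt hy.le
    rw [lemF _ _ hy one_pos, li_scale_Ioi _ (show 0 < 1 / Real.sqrt y by positivity)]
    have e : ∀ s : ℝ, ENNReal.ofReal (2 / Real.sqrt ((1 / Real.sqrt y * s)^2 * (x - 0)^2 + (1 + (1 / Real.sqrt y * s)^2) * ((1 / Real.sqrt y * s)^2 * y^2 + 1^2)))
       = 2 * ENNReal.ofReal (1 / Real.sqrt (s^4 + (4/(1 / Real.sqrt w)^2 - 2) * s^2 + 1)) := by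
      intro s
      rw [two_ofReal]
      congr 4
      rw [mul_pow, div_pow, hyy, hcsq, hw]
      field_simp
      ring
    simp_rw [e]
    rw [lintegral_const_mul' _ _ (by simp), N_lint (by positivity) (by rw [div_le_one (by positivity)]; exact hs)]
    rw [show (2:ENNReal) = ENNReal.ofReal 2 by simp, ← mul_assoc, ← ENNReal.ofReal_mul (by positivity), ← ENNReal.ofReal_mul (by positivity)]
    congr 1; ring
  rw [h1]
  unfold HE
  have := JR_nonneg (1 / Real.sqrt w)
  rw [← ENNReal.ofReal_pow (by positivity), ← ENNReal.ofReal_mul (by positivity), mul_pow, div_pow, Real.sq_sqrt hy.le]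
  norm_num

lemma PhiE_meas : Measurable (fun z : ℝ × ℝ => PhiE z.2 z.1) := by
  unfold PhiE
  have hw := wE_meas
  refine Measurable.lintegral_prod_right' (f := fun p : (ℝ × ℝ) × ℝ => eE p.1.2 p.1.1 p.2 * wE p.2) ?_
  have := eE_meas
  fun_prop

lemma TT2 : TT = ∫⁻ y in Set.Ioi (0:ℝ), ENNReal.ofReal (8 / y) * ∫⁻ p, HE (p^2 + (1+y)^2/(4*y)) := by
  unfold TT
  have := PhiE_meas
  rw [lintegral_prod _ (by apply Measurable.aemeasurable; fun_prop)]
  refine setLIntegral_congr_fun measurableSet_Ioi fun y hy => ?_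
  have hy' : 0 < y := hy
  simp only [PhiE_eq _ hy']
  have hsy := Real.sqrt_pos.2 hy'
  have hyy := Real.sq_sqrt hy'.le
  rw [lintegral_const_mul' _ _ ENNReal.ofReal_ne_top, lintegral_const_mul' _ _ ENNReal.ofReal_ne_top,
    li_scale_univ _ (show 0 < 2 * Real.sqrt y by positivity), ← mul_assoc, ← mul_assoc,
    ← ENNReal.ofReal_mul (by positivity), ← ENNReal.ofReal_mul (by positivity)]
  congr 1
  · congr 1; field_simp; norm_num
  · refine lintegral_congr fun p => ?_
    congr 1
    rw [mul_pow, mul_pow, hyy]; field_simp; ring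

lemma TT3 : TT = ∫⁻ v, ENNReal.ofReal (16 / Real.sqrt (1 + v^2)) * ∫⁻ p, HE (p^2 + (1 + v^2)) := by
  rw [TT2]
  have im : (fun s : ℝ => s^2) '' Set.Ioi 0 = Set.Ioi 0 := by
    ext y; constructor
    · rintro ⟨s, hs, rfl⟩; exact pow_pos (Set.mem_Ioi.1 hs) 2
    · intro hy; exact ⟨Real.sqrt y, Real.sqrt_pos.2 hy, Real.sq_sqrt (le_of_lt hy)⟩
  have inj : Set.InjOn (fun s : ℝ => s^2) (Set.Ioi 0) := fun a ha b hb h =>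
    (sq_eq_sq₀ (le_of_lt ha) (le_of_lt hb)).1 h
  conv_lhs => rw [← im]
  conv_rhs => rw [← setLIntegral_univ, ← gauss_image]
  rw [lintegral_image_eq_lintegral_abs_deriv_mul measurableSet_Ioi
    (fun x hx => by simpa using (hasDerivAt_pow 2 x).hasDerivWithinAt) inj,
    lintegral_image_eq_lintegral_abs_deriv_mul measurableSet_Ioi
    (fun x hx => (gauss_deriv hx).hasDerivWithinAt) gauss_inj]
  refine setLIntegral_congr_fun measurableSet_Ioi fun s hs => ?_
  have hs' : 0 < s := hs
  have e : 1 + ((s - s⁻¹)/2)^2 = ((s + s⁻¹)/2)^2 := by field_simp; ring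
  have e2 : (1 + s^2)^2/(4 * s^2) = ((s + s⁻¹)/2)^2 := by field_simp; ring
  simp only [e, e2]
  rw [Real.sqrt_sq (by positivity), abs_of_pos (by positivity), abs_of_pos (by positivity), ← mul_assoc, ← mul_assoc,
   ← ENNReal.ofReal_mul (by positivity), ← ENNReal.ofReal_mul (by positivity)]
  congr 2
  field_simp
  ring

lemma ang_real (r : ℝ) : ∫ θ in (-π)..π, 1 / Real.sqrt (1 + r^2 * Real.sin θ^2)
    = 4 * (1 / Real.sqrt (1 + r^2) * JR (1 / Real.sqrt (1 + r^2))) := by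
  set g : ℝ → ℝ := fun θ => 1 / Real.sqrt (1 + r^2 * Real.sin θ^2) with hg
  have hpos : ∀ θ : ℝ, 0 < 1 + r^2 * Real.sin θ^2 := fun θ => by positivity
  have hc : Continuous g := continuous_const.div (by fun_prop) fun θ => (Real.sqrt_pos.2 (hpos θ)).ne'
  have hi : ∀ a b : ℝ, IntervalIntegrable g volume a b := fun a b => hc.intervalIntegrable a b
  have h1 : ∫ θ in (-π)..0, g θ = ∫ θ in (0:ℝ)..π, g θ := by
    have := intervalIntegral.integral_comp_neg (a := 0) (b := π) g
    rw [neg_zero] at this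
    rw [← this]
    simp [hg]
  have h2 : ∫ θ in (π/2)..π, g θ = ∫ θ in (0:ℝ)..(π/2), g θ := by
    have := intervalIntegral.integral_comp_sub_left (a := 0) (b := π/2) g π
    rw [sub_zero, show π - π/2 = π/2 by ring] at this
    rw [← this]
    simp [hg]
  have hr : 0 < 1 + r^2 := by positivity
  have h3 : ∫ θ in (0:ℝ)..(π/2), g θ = 1 / Real.sqrt (1 + r^2) * JR (1 / Real.sqrt (1 + r^2)) := by
    have := intervalIntegral.integral_comp_sub_left (a := 0) (b := π/2) g (π/2)
    rw [sub_zero, sub_self] at this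
    rw [← this, ← ellipticK_eq (k := r / Real.sqrt (1 + r^2)) (by
      rw [div_pow, div_pow, Real.sq_sqrt hr.le]; field_simp; ring)]
    unfold ellipticK
    rw [← intervalIntegral.integral_const_mul]
    refine intervalIntegral.integral_congr fun θ _ => ?_
    simp only [hg, Real.sin_pi_div_two_sub]
    rw [one_div_mul_one_div, ← Real.sqrt_mul hr.le]
    congr 2
    rw [div_pow, Real.sq_sqrt hr.le, Real.cos_sq']
    field_simp
    ring
  rw [← intervalIntegral.integral_add_adjacent_intervals (hi (-π) 0) (hi 0 π), h1,
    ← intervalIntegral.integral_add_adjacent_intervals (hi 0 (π/2)) (hi (π/2) π), h2, h3]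
  ring

lemma ang (r : ℝ) : ∫⁻ θ in Set.Ioo (-π) π, ENNReal.ofReal (16 / Real.sqrt (1 + (r * Real.sin θ)^2))
    = ENNReal.ofReal (64 * (1 / Real.sqrt (1 + r^2) * JR (1 / Real.sqrt (1 + r^2)))) := by
  have h := ang_real r
  rw [intervalIntegral.integral_of_le (by linarith [Real.pi_pos]), ← integral_Ioc_eq_integral_Ioo.symm] at h
  rw [show 64 * (1 / Real.sqrt (1 + r^2) * JR (1 / Real.sqrt (1 + r^2))) =
     16 * (4 * (1 / Real.sqrt (1 + r^2) * JR (1 / Real.sqrt (1 + r^2)))) by ring, ← h,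
     ← MeasureTheory.integral_const_mul]
  rw [ofReal_integral_eq_lintegral_ofReal]
  · refine lintegral_congr fun θ => ?_
    congr 1; rw [mul_pow]; ring
  · have hc : Continuous (fun θ : ℝ => 16 * (1 / Real.sqrt (1 + r^2 * Real.sin θ^2))) :=
      continuous_const.mul (continuous_const.div (by fun_prop) fun θ => (Real.sqrt_pos.2 (by positivity)).ne')
    exact (hc.integrableOn_Icc (a := -π) (b := π)).mono_set Set.Ioo_subset_Icc_self
  · exact Eventually.of_forall fun x => by positivity

lemma TT4 : TT = ∫⁻ r in Set.Ioi (0:ℝ), ENNReal.ofReal (64 * r * (1 / Real.sqrt (1 + r^2))^3 * JR (1 / Real.sqrt (1 + r^2))^3) := by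
  have hm := HE_meas
  rw [TT3]
  have e1 : ∫⁻ v, ENNReal.ofReal (16 / Real.sqrt (1 + v^2)) * ∫⁻ p, HE (p^2 + (1 + v^2))
     = ∫⁻ z : ℝ × ℝ, ENNReal.ofReal (16 / Real.sqrt (1 + z.2^2)) * HE (z.1^2 + (1 + z.2^2)) := by
    rw [Measure.volume_eq_prod, lintegral_prod_symm _ (by apply Measurable.aemeasurable; fun_prop)]
    refine lintegral_congr fun v => ?_
    exact (lintegral_const_mul' _ _ ENNReal.ofReal_ne_top).symm
  rw [e1, ← lintegral_comp_polarCoord_symm]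
  rw [polarCoord_target, Measure.volume_eq_prod, ← Measure.prod_restrict]
  have e2 : ∀ q : ℝ × ℝ, ENNReal.ofReal q.1 • (ENNReal.ofReal (16 / Real.sqrt (1 + (polarCoord.symm q).2^2)) * HE ((polarCoord.symm q).1^2 + (1 + (polarCoord.symm q).2^2)))
     = ENNReal.ofReal q.1 * HE (1 + q.1^2) * ENNReal.ofReal (16 / Real.sqrt (1 + (q.1 * Real.sin q.2)^2)) := by
    intro q
    rw [polarCoord_symm_apply]
    simp only [smul_eq_mul]
    rw [show (q.1 * Real.cos q.2)^2 + (1 + (q.1 * Real.sin q.2)^2) = 1 + q.1^2 by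
      have := Real.sin_sq_add_cos_sq q.2
      linear_combination q.1^2 * this]
    ring
  simp_rw [e2]
  rw [lintegral_prod _ (by apply Measurable.aemeasurable; fun_prop)]
  refine setLIntegral_congr_fun measurableSet_Ioi fun r hr => ?_
  have hr' : 0 < r := hr
  simp only
  unfold HE
  rw [lintegral_const_mul' _ _ (ENNReal.mul_ne_top ENNReal.ofReal_ne_top ENNReal.ofReal_ne_top), ang]
  have := JR_nonneg (1 / Real.sqrt (1 + r^2))
  rw [← ENNReal.ofReal_mul (by positivity), ← ENNReal.ofReal_mul (by positivity)]
  congr 1; ring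

lemma TT5 : TT = ∫⁻ c in Set.Ioo (0:ℝ) 1, ENNReal.ofReal (64 * JR c^3) := by
  rw [TT4]
  have im : (fun r : ℝ => 1 / Real.sqrt (1 + r^2)) '' Set.Ioi 0 = Set.Ioo 0 1 := by
    ext y; constructor
    · rintro ⟨r, hr, rfl⟩
      have hr' : 0 < r := hr
      refine ⟨by positivity, ?_⟩
      rw [div_lt_one (by positivity)]
      exact Real.lt_sqrt_of_sq_lt (by nlinarith)
    · intro hy
      have h0 := hy.1
      have h1 := hy.2
      have hq : 0 < 1 / y^2 - 1 := by
        rw [sub_pos, lt_div_iff₀ (by positivity)]; nlinarith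
      refine ⟨Real.sqrt (1 / y^2 - 1), Real.sqrt_pos.2 hq, ?_⟩
      simp only
      rw [Real.sq_sqrt hq.le, show 1 + (1 / y^2 - 1) = (1/y)^2 by field_simp; ring, Real.sqrt_sq (by positivity)]
      field_simp
  have inj : Set.InjOn (fun r : ℝ => 1 / Real.sqrt (1 + r^2)) (Set.Ioi 0) := by
    intro a ha b hb h
    have h' : Real.sqrt (1 + a^2) = Real.sqrt (1 + b^2) := by
      simpa using h
    rw [Real.sqrt_inj (by positivity) (by positivity)] at h'
    exact (sq_eq_sq₀ (le_of_lt ha) (le_of_lt hb)).1 (by linarith)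
  have der : ∀ r : ℝ, HasDerivAt (fun r : ℝ => 1 / Real.sqrt (1 + r^2)) (-(r * (1 / Real.sqrt (1 + r^2))^3)) r := by
    intro r
    have h0 : 0 < 1 + r^2 := by positivity
    have h1 := Real.sqrt_pos.2 h0
    have := ((((hasDerivAt_id r).pow 2).const_add 1).sqrt h0.ne').inv h1.ne'
    refine (this.congr_deriv ?_).congr_of_eventuallyEq (Eventually.of_forall fun x => by simp)
    simp only [id, Pi.pow_apply]
    norm_num
    field_simp
  rw [← im, lintegral_image_eq_lintegral_abs_deriv_mul measurableSet_Ioi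
    (fun x hx => (der x).hasDerivWithinAt) inj]
  refine setLIntegral_congr_fun measurableSet_Ioi fun r hr => ?_
  have hr' : 0 < r := hr
  rw [abs_neg, abs_of_pos (by positivity), ← ENNReal.ofReal_mul (by positivity)]
  congr 1; ring

lemma main_lint : ∫⁻ c in Set.Ioo (0:ℝ) 1, ENNReal.ofReal (JR c^3) = ENNReal.ofReal (Real.Gamma (1/4)^8 / (128 * π^2)) := by
  have h := TT_eq
  rw [TT5] at h
  have e : ∀ c : ℝ, ENNReal.ofReal (64 * JR c^3) = ENNReal.ofReal 64 * ENNReal.ofReal (JR c^3) := fun c =>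
    ENNReal.ofReal_mul (by norm_num)
  simp_rw [e] at h
  have hg : 0 ≤ Real.Gamma (1/4)^2 / (2 * Real.sqrt π) := by positivity
  rw [lintegral_const_mul' _ _ ENNReal.ofReal_ne_top, GG_eq, ← ENNReal.ofReal_pow hg, show (8:ENNReal) = ENNReal.ofReal 8 by simp,
    ← ENNReal.ofReal_mul (by norm_num)] at h
  have h64 : ENNReal.ofReal 64 ≠ 0 := by simp
  rw [← ENNReal.mul_right_inj h64 ENNReal.ofReal_ne_top, h, ← ENNReal.ofReal_mul (by norm_num)]
  congr 1
  rw [div_pow, mul_pow, show Real.sqrt π^4 = (Real.sqrt π^2)^2 by ring, Real.sq_sqrt Real.pi_pos.le]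
  field_simp
  norm_num

lemma JR3_integrable : IntegrableOn (fun k => JR k^3) (Set.Ioo 0 1) := by
  refine ⟨(JR_meas.pow_const 3).aestronglyMeasurable, ?_⟩
  rw [hasFiniteIntegral_iff_ofReal (Eventually.of_forall fun x => pow_nonneg (JR_nonneg x) 3), main_lint]
  exact ENNReal.ofReal_lt_top

lemma JR3_value : ∫ k in Set.Ioo (0:ℝ) 1, JR k^3 = Real.Gamma (1/4)^8 / (128 * π^2) := by
  have h := ofReal_integral_eq_lintegral_ofReal JR3_integrable (Eventually.of_forall fun x => pow_nonneg (JR_nonneg x) 3)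
  rw [main_lint] at h
  exact (ENNReal.ofReal_eq_ofReal_iff (integral_nonneg fun x => pow_nonneg (JR_nonneg x) 3)
    (by have := Real.Gamma_pos_of_pos (show (0:ℝ) < 1/4 by norm_num); positivity)).1 h

/-- complementary modulus attached to `r` -/
noncomputable def kc (r : ℝ) : ℝ := 1 / Real.sqrt (1 + r^2)
noncomputable def pp (r : ℝ) : ℝ := kc r * JR (r * kc r)
noncomputable def qq (r : ℝ) : ℝ := kc r * JR (kc r)
noncomputable def hh (r s : ℝ) : ℝ := 1 / Real.sqrt ((r^2 + s^2) * |1 - s^2|)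
noncomputable def MM (r : ℝ) : ℝ := ∫ s in Set.Ioi (0:ℝ), hh r s

lemma kc_pos (r : ℝ) : 0 < kc r := by unfold kc; positivity
lemma kc_sq (r : ℝ) : kc r^2 = 1 / (1 + r^2) := by
  unfold kc; rw [div_pow, Real.sq_sqrt (by positivity), one_pow]
lemma pp_nonneg (r : ℝ) : 0 ≤ pp r := mul_nonneg (kc_pos r).le (JR_nonneg _)
lemma qq_nonneg (r : ℝ) : 0 ≤ qq r := mul_nonneg (kc_pos r).le (JR_nonneg _)
lemma hh_nonneg (r s : ℝ) : 0 ≤ hh r s := by unfold hh; positivity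
lemma pp_meas : Measurable pp := by
  have := JR_meas
  unfold pp kc; fun_prop
lemma qq_meas : Measurable qq := by
  have := JR_meas
  unfold qq kc; fun_prop

lemma kc_image : kc '' Set.Ioi 0 = Set.Ioo 0 1 := by
  ext y; constructor
  · rintro ⟨r, hr, rfl⟩
    have hr' : 0 < r := hr
    refine ⟨kc_pos r, ?_⟩
    unfold kc
    rw [div_lt_one (by positivity)]
    exact Real.lt_sqrt_of_sq_lt (by nlinarith)
  · intro hy
    have h0 := hy.1
    have h1 := hy.2
    have hq : 0 < 1 / y^2 - 1 := by
      rw [sub_pos, lt_div_iff₀ (by positivity)]; nlinarith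
    refine ⟨Real.sqrt (1 / y^2 - 1), Real.sqrt_pos.2 hq, ?_⟩
    unfold kc
    rw [Real.sq_sqrt hq.le, show 1 + (1 / y^2 - 1) = (1/y)^2 by field_simp; ring, Real.sqrt_sq (by positivity)]
    field_simp

lemma kc_inj : Set.InjOn kc (Set.Ioi 0) := by
  intro a ha b hb h
  have h' : Real.sqrt (1 + a^2) = Real.sqrt (1 + b^2) := by
    simpa [kc] using h
  rw [Real.sqrt_inj (by positivity) (by positivity)] at h'
  exact (sq_eq_sq₀ (le_of_lt ha) (le_of_lt hb)).1 (by linarith)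

lemma kc_deriv (r : ℝ) : HasDerivAt kc (-(r * kc r^3)) r := by
  have h0 : 0 < 1 + r^2 := by positivity
  have h1 := Real.sqrt_pos.2 h0
  have := ((((hasDerivAt_id r).pow 2).const_add 1).sqrt h0.ne').inv h1.ne'
  refine (this.congr_deriv ?_).congr_of_eventuallyEq (Eventually.of_forall fun x => by simp [kc])
  simp only [id, Pi.pow_apply, kc]
  norm_num
  field_simp

lemma hh_p_aux {r t : ℝ} (hr : 0 < r) (ht : 0 < t) :
    |-(t * kc t^3)| • hh r (kc t) = kc r * (1 / Real.sqrt ((1 + t^2) * (1 + (r * kc r)^2 * t^2))) := by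
  have h1 := kc_pos t
  have h2 := kc_pos r
  have e1 : 1 - kc t^2 = (t * kc t)^2 := by rw [mul_pow, kc_sq]; field_simp; ring
  have e3 : (r^2 + kc t^2) * (t * kc t)^2 = (t * kc t^3)^2 * ((1 / kc r)^2 * ((1 + t^2) * (1 + (r * kc r)^2 * t^2))) := by
    rw [show kc t^3 = kc t^2 * kc t by ring, mul_pow, mul_pow, mul_pow, mul_pow, div_pow, kc_sq, kc_sq]; field_simp; ring
  unfold hh
  rw [e1, abs_neg, abs_of_pos (by positivity), abs_of_pos (show 0 < (t * kc t)^2 by positivity), e3,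
    Real.sqrt_mul (by positivity), Real.sqrt_mul (by positivity), Real.sqrt_sq (by positivity), Real.sqrt_sq (by positivity),
    smul_eq_mul]
  have : 0 < Real.sqrt ((1 + t^2) * (1 + (r * kc r)^2 * t^2)) := by positivity
  field_simp

lemma hh_p {r : ℝ} (hr : 0 < r) : IntegrableOn (hh r) (Set.Ioo 0 1) ∧ ∫ s in Set.Ioo 0 1, hh r s = pp r := by
  constructor
  · rw [← kc_image, integrableOn_image_iff_integrableOn_abs_deriv_smul measurableSet_Ioi
      (fun x hx => (kc_deriv x).hasDerivWithinAt) kc_inj]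
    refine IntegrableOn.congr_fun (((integrable_JR (mul_pos hr (kc_pos r))).const_mul (kc r)).integrableOn)
      (fun t ht => (hh_p_aux hr ht).symm) measurableSet_Ioi
  · rw [← kc_image, integral_image_eq_integral_abs_deriv_smul measurableSet_Ioi
      (fun x hx => (kc_deriv x).hasDerivWithinAt) kc_inj,
      setIntegral_congr_fun measurableSet_Ioi (fun t ht => hh_p_aux hr ht), MeasureTheory.integral_const_mul]
    rfl

lemma sq1_image : (fun t : ℝ => Real.sqrt (1 + t^2)) '' Set.Ioi 0 = Set.Ioi 1 := by
  ext y; constructor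
  · rintro ⟨r, hr, rfl⟩
    have hr' : 0 < r := hr
    exact Real.lt_sqrt_of_sq_lt (by nlinarith)
  · intro hy
    have h1 : 1 < y := hy
    have hq : 0 < y^2 - 1 := by nlinarith
    refine ⟨Real.sqrt (y^2 - 1), Real.sqrt_pos.2 hq, ?_⟩
    simp only
    rw [Real.sq_sqrt hq.le, show 1 + (y^2 - 1) = y^2 by ring, Real.sqrt_sq (by linarith)]

lemma sq1_inj : Set.InjOn (fun t : ℝ => Real.sqrt (1 + t^2)) (Set.Ioi 0) := by
  intro a ha b hb h
  have h' : Real.sqrt (1 + a^2) = Real.sqrt (1 + b^2) := h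
  rw [Real.sqrt_inj (by positivity) (by positivity)] at h'
  exact (sq_eq_sq₀ (le_of_lt ha) (le_of_lt hb)).1 (by linarith)

lemma sq1_deriv (r : ℝ) : HasDerivAt (fun t : ℝ => Real.sqrt (1 + t^2)) (r / Real.sqrt (1 + r^2)) r := by
  have h0 : 0 < 1 + r^2 := by positivity
  have := (((hasDerivAt_id r).pow 2).const_add 1).sqrt h0.ne'
  refine this.congr_deriv ?_
  simp only [id, Pi.pow_apply]
  norm_num
  field_simp

lemma hh_q_aux {r t : ℝ} (ht : 0 < t) :
    |t / Real.sqrt (1 + t^2)| • hh r (Real.sqrt (1 + t^2)) = kc r * (1 / Real.sqrt ((1 + t^2) * (1 + (kc r)^2 * t^2))) := by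
  have h2 := kc_pos r
  have h0 : 0 < 1 + t^2 := by positivity
  have e3 : (r^2 + (1 + t^2)) * t^2 = t^2 * ((1 / kc r)^2 * ((1 + (kc r)^2 * t^2))) := by
    rw [div_pow, kc_sq]; field_simp; ring
  unfold hh
  rw [Real.sq_sqrt h0.le, abs_of_pos (by positivity), show 1 - (1 + t^2) = - t^2 by ring, abs_neg, abs_of_pos (show 0 < t^2 by positivity), e3,
    Real.sqrt_mul (by positivity), Real.sqrt_mul (by positivity), Real.sqrt_sq (by positivity), Real.sqrt_sq (by positivity),
    Real.sqrt_mul h0.le,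
    smul_eq_mul]
  have : 0 < Real.sqrt (1 + (kc r)^2 * t^2) := by positivity
  field_simp

lemma hh_q (r : ℝ) : IntegrableOn (hh r) (Set.Ioi 1) ∧ ∫ s in Set.Ioi 1, hh r s = qq r := by
  constructor
  · rw [← sq1_image, integrableOn_image_iff_integrableOn_abs_deriv_smul measurableSet_Ioi
      (fun x hx => (sq1_deriv x).hasDerivWithinAt) sq1_inj]
    refine IntegrableOn.congr_fun (((integrable_JR (kc_pos r)).const_mul (kc r)).integrableOn)
      (fun t ht => (hh_q_aux ht).symm) measurableSet_Ioi
  · rw [← sq1_image, integral_image_eq_integral_abs_deriv_smul measurableSet_Ioi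
      (fun x hx => (sq1_deriv x).hasDerivWithinAt) sq1_inj,
      setIntegral_congr_fun measurableSet_Ioi (fun t ht => hh_q_aux ht), MeasureTheory.integral_const_mul]
    rfl

lemma Ioi_split : Set.Ioi (0:ℝ) =ᵐ[volume] (Set.Ioo 0 1 ∪ Set.Ioi 1 : Set ℝ) := by
  have h : Set.Ioi (0:ℝ) = Set.Ioo 0 1 ∪ Set.Ici 1 := (Set.Ioo_union_Ici_eq_Ioi (by norm_num)).symm
  rw [h]
  exact (ae_eq_refl _).union Ioi_ae_eq_Ici.symm

lemma hh_int {r : ℝ} (hr : 0 < r) : IntegrableOn (hh r) (Set.Ioi 0) :=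
  (((hh_p hr).1).union (hh_q r).1).congr_set_ae Ioi_split

lemma MM_eq {r : ℝ} (hr : 0 < r) : MM r = pp r + qq r := by
  unfold MM
  rw [setIntegral_congr_set Ioi_split, setIntegral_union _ measurableSet_Ioi (hh_p hr).1 (hh_q r).1, (hh_p hr).2, (hh_q r).2]
  exact Set.disjoint_left.2 fun x hx hx' => absurd hx.2 (not_lt.2 (le_of_lt hx'))

lemma MM_nonneg (r : ℝ) : 0 ≤ MM r := integral_nonneg fun s => hh_nonneg r s

lemma MM_anti {a b : ℝ} (ha : 0 < a) (hab : a ≤ b) : MM b ≤ MM a := by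
  refine setIntegral_mono_on (hh_int (ha.trans_le hab)) (hh_int ha) measurableSet_Ioi fun s hs => ?_
  have hs' : 0 < s := hs
  unfold hh
  rcases eq_or_lt_of_le (abs_nonneg (1 - s^2)) with h | h
  · rw [← h]; simp
  · gcongr

lemma kk_image : (fun r : ℝ => r * kc r) '' Set.Ioi 0 = Set.Ioo 0 1 := by
  ext y; constructor
  · rintro ⟨r, hr, rfl⟩
    have hr' : 0 < r := hr
    refine ⟨mul_pos hr' (kc_pos r), ?_⟩
    simp only [kc]
    rw [mul_one_div, div_lt_one (by positivity)]
    exact Real.lt_sqrt_of_sq_lt (by nlinarith)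
  · intro hy
    have h0 := hy.1
    have h1 := hy.2
    have hq : 0 < 1 - y^2 := by nlinarith
    have hq' := Real.sqrt_pos.2 hq
    refine ⟨y / Real.sqrt (1 - y^2), by simp only [Set.mem_Ioi]; positivity, ?_⟩
    simp only [kc]
    rw [div_pow, Real.sq_sqrt hq.le, show 1 + y^2 / (1 - y^2) = 1 / (1 - y^2) by field_simp; ring, Real.sqrt_div zero_le_one, Real.sqrt_one]
    field_simp

lemma kk_deriv (r : ℝ) : HasDerivAt (fun r : ℝ => r * kc r) (kc r^3) r := by
  refine ((hasDerivAt_id r).mul (kc_deriv r)).congr_deriv ?_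
  simp only [id]
  have h := kc_sq r
  have h2 : kc r * (1 + r^2) * kc r = 1 := by
    rw [mul_right_comm, ← sq, h]; field_simp
  have : kc r = kc r^3 * (1 + r^2) := by
    calc kc r = kc r * 1 := by ring
      _ = kc r * (kc r * (1 + r^2) * kc r) := by rw [h2]
      _ = _ := by ring
  linear_combination this

lemma one_sub_kk (r : ℝ) : Real.sqrt (1 - (r * kc r)^2) = kc r := by
  rw [show 1 - (r * kc r)^2 = kc r^2 by rw [mul_pow, kc_sq]; field_simp; ring, Real.sqrt_sq (kc_pos r).le]

lemma kk_inj : Set.InjOn (fun r : ℝ => r * kc r) (Set.Ioi 0) := by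
  intro a ha b hb h
  have h' : a * kc a = b * kc b := h
  refine kc_inj ha hb ?_
  rw [← one_sub_kk a, ← one_sub_kk b, h']

lemma kk_int (f : ℝ → ℝ) : ∫ k in Set.Ioo (0:ℝ) 1, f k = ∫ r in Set.Ioi (0:ℝ), kc r^3 * f (r * kc r) := by
  rw [← kk_image, integral_image_eq_integral_abs_deriv_smul measurableSet_Ioi
      (fun x hx => (kk_deriv x).hasDerivWithinAt) kk_inj]
  refine setIntegral_congr_fun measurableSet_Ioi fun r hr => ?_
  simp only [smul_eq_mul]
  rw [abs_of_pos (pow_pos (kc_pos r) 3)]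

lemma kk_integrable {f : ℝ → ℝ} (h : IntegrableOn f (Set.Ioo 0 1)) :
    IntegrableOn (fun r => kc r^3 * f (r * kc r)) (Set.Ioi 0) := by
  rw [← kk_image, integrableOn_image_iff_integrableOn_abs_deriv_smul measurableSet_Ioi
      (fun x hx => (kk_deriv x).hasDerivWithinAt) kk_inj] at h
  refine h.congr_fun (fun r hr => ?_) measurableSet_Ioi
  simp only [smul_eq_mul]
  rw [abs_of_pos (pow_pos (kc_pos r) 3)]

lemma pp3_int : IntegrableOn (fun r => pp r^3) (Set.Ioi 0) := by
  refine (kk_integrable JR3_integrable).congr_fun (fun r hr => ?_) measurableSet_Ioi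
  simp only [pp]; ring

lemma qq3_int : IntegrableOn (fun r => qq r^3) (Set.Ioi 0) := by
  refine (kk_integrable (integ_UK3 JR3_integrable)).congr_fun (fun r hr => ?_) measurableSet_Ioi
  simp only [qq, UK, one_sub_kk]; ring

lemma MM3_int : IntegrableOn (fun r => MM r^3) (Set.Ioi 0) := by
  have h : IntegrableOn (fun r => (pp r + qq r)^3) (Set.Ioi 0) := by
    refine Integrable.mono' ((pp3_int.add qq3_int).const_mul 4) (((pp_meas.add qq_meas).pow_const 3).aestronglyMeasurable) ?_
    refine Eventually.of_forall fun r => ?_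
    have h1 := pp_nonneg r
    have h2 := qq_nonneg r
    rw [Real.norm_of_nonneg (by positivity)]
    simp only [Pi.add_apply]
    nlinarith [mul_nonneg (add_nonneg h1 h2) (sq_nonneg (pp r - qq r))]
  refine h.congr_fun (fun r hr => ?_) measurableSet_Ioi
  simp only [MM_eq hr]

lemma hC_red : ∫ k in Set.Ioo (0:ℝ) 1, (JR k^3 - 3 * (JR k * UK k^2))
    = ∫ r in Set.Ioi (0:ℝ), (pp r^3 - 3 * (pp r * qq r^2)) := by
  rw [kk_int]
  refine setIntegral_congr_fun measurableSet_Ioi fun r hr => ?_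
  simp only [pp, qq, UK, one_sub_kk]; ring

lemma pq_int : IntegrableOn (fun r => pp r^3 - 3 * (pp r * qq r^2)) (Set.Ioi 0) := by
  refine pp3_int.sub (Integrable.const_mul ?_ 3)
  refine Integrable.mono' (pp3_int.add qq3_int) (Measurable.aestronglyMeasurable ?_) ?_
  · have := pp_meas
    have := qq_meas
    fun_prop
  · refine Eventually.of_forall fun r => ?_
    have h1 := pp_nonneg r
    have h2 := qq_nonneg r
    rw [Real.norm_of_nonneg (by positivity)]
    simp only [Pi.add_apply]
    nlinarith [mix_le h2 h1]

/-- decay of M -/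
lemma MM_decay : Tendsto (fun T : ℝ => T * MM T^3) atTop (𝓝 0) := by
  have h1 := intervalIntegral_tendsto_integral_Ioi 0 MM3_int tendsto_id
  have h2 := intervalIntegral_tendsto_integral_Ioi 0 MM3_int (tendsto_id.atTop_div_const (show (0:ℝ) < 2 by norm_num))
  have h3 := ((h1.sub h2).const_mul 2)
  rw [sub_self, mul_zero] at h3
  refine squeeze_zero' (Filter.eventually_atTop.2 ⟨0, fun T hT => mul_nonneg hT (pow_nonneg (MM_nonneg T) 3)⟩) ?_ h3
  filter_upwards [eventually_gt_atTop 0] with T hT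
  have hT' : T/2 ≤ T := by linarith
  have i1 : IntervalIntegrable (fun r => MM r^3) volume 0 (T/2) :=
    (intervalIntegrable_iff_integrableOn_Ioc_of_le (by linarith)).2 (MM3_int.mono_set fun x hx => hx.1)
  have i2 : IntervalIntegrable (fun r => MM r^3) volume (T/2) T :=
    (intervalIntegrable_iff_integrableOn_Ioc_of_le hT').2 (MM3_int.mono_set fun x hx => lt_trans (by linarith) hx.1)
  have h := intervalIntegral.integral_add_adjacent_intervals i1 i2
  have h4 : (T - T/2) * MM T^3 ≤ ∫ r in (T/2)..T, MM r^3 := by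
    have := intervalIntegral.integral_mono_on (f := fun _ => MM T^3) hT' (by simp) i2 (fun x hx => by
      have hx0 : 0 < x := by linarith [hx.1]
      have := MM_anti hx0 hx.2
      have := MM_nonneg T
      gcongr)
    rwa [intervalIntegral.integral_const, smul_eq_mul] at this
  simp only [id]
  rw [← h]
  linarith

/-- the principal inverse square root -/
noncomputable def rt (z : ℂ) : ℂ := z ^ ((-1/2 : ℝ) : ℂ)
noncomputable def gc (c : ℂ) (t : ℝ) : ℂ := ((1 / Real.sqrt (1 + t^2) : ℝ) : ℂ) * rt (1 + c^2 * (t:ℂ)^2)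
noncomputable def Jc (c : ℂ) : ℂ := ∫ t in Set.Ioi (0:ℝ), gc c t

lemma rpow_neg_half {x : ℝ} (hx : 0 ≤ x) : x ^ (-1/2 : ℝ) = 1 / Real.sqrt x := by
  rw [show (-1/2 : ℝ) = -(1/2) by norm_num, Real.rpow_neg hx, ← Real.sqrt_eq_rpow, one_div]

lemma norm_rt (z : ℂ) : ‖rt z‖ = 1 / Real.sqrt ‖z‖ := by
  unfold rt
  rw [Complex.norm_cpow_real, rpow_neg_half (norm_nonneg z)]

lemma rt_pos {x : ℝ} (hx : 0 < x) : rt (x : ℂ) = ((1 / Real.sqrt x : ℝ) : ℂ) := by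
  unfold rt
  rw [← Complex.ofReal_cpow hx.le, rpow_neg_half hx.le]

lemma rt_neg {x : ℝ} (hx : x < 0) : rt (x : ℂ) = -Complex.I * ((1 / Real.sqrt (-x) : ℝ) : ℂ) := by
  have h := rt_pos (neg_pos.2 hx)
  unfold rt at *
  rw [Complex.ofReal_cpow_of_nonpos hx.le, ← Complex.ofReal_neg, h, mul_comm]
  congr 1
  rw [show (π : ℂ) * Complex.I * ((-1/2 : ℝ) : ℂ) = -(π / 2 * Complex.I) by push_cast; ring, Complex.exp_neg, Complex.exp_pi_div_two_mul_I]
  simp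

lemma rt_meas : Measurable rt := by unfold rt; fun_prop

lemma gc_meas (c : ℂ) : Measurable (gc c) := by
  have := rt_meas
  unfold gc
  fun_prop

lemma norm_gc (c : ℂ) (t : ℝ) : ‖gc c t‖ = 1 / Real.sqrt ((1 + t^2) * ‖1 + c^2 * (t:ℂ)^2‖) := by
  unfold gc
  rw [norm_mul, norm_rt, Complex.norm_of_nonneg (by positivity), one_div_mul_one_div, Real.sqrt_mul (by positivity)]

lemma hh_scale {r : ℝ} (hr : 0 < r) (t : ℝ) : r * hh r (r * t) = 1 / Real.sqrt ((1 + t^2) * |1 - r^2 * t^2|) := by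
  unfold hh
  rw [mul_pow, show (r^2 + r^2 * t^2) * |1 - r^2 * t^2| = r^2 * ((1 + t^2) * |1 - r^2 * t^2|) by ring,
    Real.sqrt_mul (by positivity), Real.sqrt_sq hr.le]
  rw [← div_div]
  field_simp

lemma dom_int {r : ℝ} (hr : 0 < r) : IntegrableOn (fun t => r * hh r (r * t)) (Set.Ioi 0) := by
  refine Integrable.const_mul ?_ r
  have := (integrableOn_Ioi_comp_mul_left_iff (hh r) 0 hr).2 (by rw [mul_zero]; exact hh_int hr)
  exact this

lemma dom_val {r : ℝ} (hr : 0 < r) : ∫ t in Set.Ioi (0:ℝ), r * hh r (r * t) = MM r := by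
  rw [MeasureTheory.integral_const_mul, integral_comp_mul_left_Ioi (hh r) 0 hr, mul_zero, smul_eq_mul, ← mul_assoc, mul_inv_cancel₀ hr.ne', one_mul]
  rfl

lemma gc_le {c : ℂ} {r t : ℝ} (hr : 0 < r) (h : |1 - r^2 * t^2| ≤ ‖1 + c^2 * (t:ℂ)^2‖) (ht : 1 - r^2 * t^2 ≠ 0) :
    ‖gc c t‖ ≤ r * hh r (r * t) := by
  rw [norm_gc, hh_scale hr]
  have : 0 < |1 - r^2 * t^2| := abs_pos.2 ht
  gcongr

lemma ae_ne {r : ℝ} (hr : 0 < r) : ∀ᵐ t ∂(volume.restrict (Set.Ioi (0:ℝ))), 1 - r^2 * t^2 ≠ 0 := by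
  have : ∀ᵐ t : ℝ, t ≠ 1 / r := by simp [ae_iff]
  filter_upwards [ae_restrict_of_ae this, ae_restrict_mem measurableSet_Ioi] with t ht ht0 h
  have ht0' : 0 < t := ht0
  apply ht
  have h1 : (r * t - 1) * (r * t + 1) = 0 := by linarith
  have h2 : r * t + 1 ≠ 0 := by positivity
  have h3 : r * t = 1 := by
    rcases mul_eq_zero.1 h1 with h | h
    · linarith
    · exact absurd h h2
  field_simp
  linarith

lemma gc_int {c : ℂ} {r : ℝ} (hr : 0 < r) (h : ∀ t : ℝ, |1 - r^2 * t^2| ≤ ‖1 + c^2 * (t:ℂ)^2‖) :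
    IntegrableOn (gc c) (Set.Ioi 0) := by
  refine Integrable.mono' (dom_int hr) (gc_meas c).aestronglyMeasurable ?_
  filter_upwards [ae_ne hr] with t ht
  exact gc_le hr (h t) ht

lemma Jc_le {c : ℂ} {r : ℝ} (hr : 0 < r) (h : ∀ t : ℝ, |1 - r^2 * t^2| ≤ ‖1 + c^2 * (t:ℂ)^2‖) :
    ‖Jc c‖ ≤ MM r := by
  rw [← dom_val hr]
  refine norm_integral_le_of_norm_le (dom_int hr) ?_
  filter_upwards [ae_ne hr] with t ht
  exact gc_le hr (h t) ht

lemma nsq (c : ℂ) (t : ℝ) : ‖1 + c^2 * (t:ℂ)^2‖^2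
    = ((1 - c.im * t)^2 + (c.re * t)^2) * ((1 + c.im * t)^2 + (c.re * t)^2) := by
  rw [← Complex.normSq_eq_norm_sq, Complex.normSq_apply]
  have h1 : (1 + c^2 * (t:ℂ)^2).re = 1 + (c.re^2 - c.im^2) * t^2 := by
    simp [pow_two, Complex.mul_re, Complex.mul_im]
  have h2 : (1 + c^2 * (t:ℂ)^2).im = 2 * c.re * c.im * t^2 := by
    simp [pow_two, Complex.mul_re, Complex.mul_im]
    left; ring
  rw [h1, h2]; ring

lemma bd_im (c : ℂ) (t : ℝ) : |1 - c.im^2 * t^2| ≤ ‖1 + c^2 * (t:ℂ)^2‖ := by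
  refine abs_le_of_sq_le_sq ?_ (norm_nonneg _)
  rw [nsq]
  nlinarith [mul_nonneg (sq_nonneg (1 - c.im * t)) (sq_nonneg (c.re * t)), mul_nonneg (sq_nonneg (1 + c.im * t)) (sq_nonneg (c.re * t)),
    mul_nonneg (sq_nonneg (c.re * t)) (sq_nonneg (c.re * t))]

lemma bd_norm (c : ℂ) (t : ℝ) : |1 - ‖c‖^2 * t^2| ≤ ‖1 + c^2 * (t:ℂ)^2‖ := by
  have := abs_norm_sub_norm_le (1:ℂ) (-(c^2 * (t:ℂ)^2))
  rw [sub_neg_eq_add, norm_neg, norm_one, norm_mul, norm_pow, norm_pow, Complex.norm_real, Real.norm_eq_abs, sq_abs] at this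
  exact this

lemma lower {a R : ℝ} (ha : 0 < a) {c : ℂ} (h1 : a ≤ c.re) (h2 : ‖c‖ ≤ R) (t : ℝ) :
    a^2 / (2 * (1 + R^2)) * (1 + t^2) ≤ ‖1 + c^2 * (t:ℂ)^2‖ := by
  have hn : c.re^2 + c.im^2 ≤ R^2 := by
    have : ‖c‖^2 ≤ R^2 := by gcongr
    rw [← Complex.normSq_eq_norm_sq, Complex.normSq_apply] at this
    nlinarith
  have key : ∀ b : ℝ, c.re^2 + b^2 ≤ R^2 → a^2 / (2 * (1 + R^2)) * (1 + t^2) ≤ (1 - b * t)^2 + (c.re * t)^2 := by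
    intro b hb
    set X := (1 - b * t)^2 + (c.re * t)^2 with hX
    have haa : a^2 ≤ c.re^2 := by gcongr
    have hX0 : 0 ≤ X := by positivity
    have e1 : a^2 * t^2 ≤ X := by
      have : a^2 * t^2 ≤ c.re^2 * t^2 := by gcongr
      nlinarith [sq_nonneg (1 - b * t)]
    have e2 : a^2 ≤ X * R^2 := by
      have : X * (c.re^2 + b^2) - c.re^2 = (b - (c.re^2 + b^2) * t)^2 := by rw [hX]; ring
      have h3 : X * (c.re^2 + b^2) ≤ X * R^2 := by gcongr
      nlinarith [sq_nonneg (b - (c.re^2 + b^2) * t)]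
    rw [div_mul_eq_mul_div, div_le_iff₀ (by positivity)]
    nlinarith [mul_nonneg hX0 (sq_nonneg R), mul_le_mul_of_nonneg_right e1 (sq_nonneg R)]
  have k1 := key c.im hn
  have k2 := key (-c.im) (by rw [neg_sq]; exact hn)
  rw [neg_mul, sub_neg_eq_add] at k2
  refine abs_le_of_sq_le_sq' ?_ (norm_nonneg _) |>.2
  rw [nsq, sq]
  exact mul_le_mul k1 k2 (by positivity) (by positivity)

lemma slit {c : ℂ} (hc : 0 < c.re) (t : ℝ) : 1 + c^2 * (t:ℂ)^2 ∈ Complex.slitPlane := by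
  have h1 : (1 + c^2 * (t:ℂ)^2).re = 1 + (c.re^2 - c.im^2) * t^2 := by
    simp [pow_two, Complex.mul_re, Complex.mul_im]
  have h2 : (1 + c^2 * (t:ℂ)^2).im = 2 * c.re * c.im * t^2 := by
    simp [pow_two, Complex.mul_re, Complex.mul_im]
    left; ring
  rw [Complex.mem_slitPlane_iff, h1, h2]
  by_cases h : c.im * t = 0
  · left
    have : c.im^2 * t^2 = 0 := by rw [← mul_pow, h]; ring
    nlinarith [mul_nonneg (sq_nonneg c.re) (sq_nonneg t)]
  · right
    have := left_ne_zero_of_mul h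
    have := right_ne_zero_of_mul h
    positivity

lemma Jc_diff {c : ℂ} (hc : 0 < c.re) : DifferentiableAt ℂ Jc c := by
  set a := c.re / 2 with ha
  have ha0 : 0 < a := by positivity
  set R := ‖c‖ + a with hR
  have hR0 : 0 < R := by positivity
  set η := a^2 / (2 * (1 + R^2)) with hη
  have hη0 : 0 < η := by positivity
  have hball : ∀ z ∈ Metric.ball c a, a ≤ z.re ∧ ‖z‖ ≤ R := by
    intro z hz
    rw [mem_ball_iff_norm] at hz
    constructor
    · have := (Complex.abs_re_le_norm (z - c)).trans hz.le
      rw [Complex.sub_re, abs_le] at this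
      linarith [this.1]
    · have := norm_sub_norm_le z c
      linarith
  have h0 : 0 < ‖c‖ := by
    refine norm_pos_iff.2 fun h => ?_
    rw [h] at hc; simp at hc
  refine (hasDerivAt_integral_of_dominated_loc_of_deriv_le (μ := volume.restrict (Set.Ioi (0:ℝ))) (F := gc)
    (F' := fun z t => ((1 / Real.sqrt (1 + t^2) : ℝ) : ℂ) * (((-1/2 : ℝ) : ℂ) * (rt (1 + z^2 * (t:ℂ)^2) / (1 + z^2 * (t:ℂ)^2)) * (2 * z * (t:ℂ)^2)))
    (bound := fun t => R / (Real.sqrt η * η) * (1 + t^2)⁻¹)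
    (Metric.ball_mem_nhds c ha0) (Eventually.of_forall fun z => (gc_meas z).aestronglyMeasurable)
    (gc_int h0 (bd_norm c)) ?_ ?_ ?_ ?_).2.differentiableAt
  · have := rt_meas
    apply Measurable.aestronglyMeasurable
    fun_prop
  · refine Eventually.of_forall fun t z hz => ?_
    obtain ⟨h1, h2⟩ := hball z hz
    have hl := lower ha0 h1 h2 t
    rw [← hη] at hl
    have hv : 0 < 1 + t^2 := by positivity
    set v := 1 + t^2 with hvdef
    have htv : t^2 ≤ v := by rw [hvdef]; linarith
    rw [norm_mul, norm_mul, norm_mul, norm_div, norm_rt, Complex.norm_of_nonneg (by positivity), Complex.norm_real, norm_mul, norm_mul, norm_pow, Complex.norm_real]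
    set n := ‖1 + z^2 * (t:ℂ)^2‖ with hn
    have hn0 : 0 < n := lt_of_lt_of_le (by positivity) hl
    simp only [Real.norm_eq_abs, sq_abs, Complex.norm_ofNat]
    rw [show |(-1/2:ℝ)| = 1/2 by norm_num [abs_of_neg]]
    calc 1 / Real.sqrt v * (1/2 * (1 / Real.sqrt n / n) * (2 * ‖z‖ * t^2))
        ≤ 1 / Real.sqrt v * (1/2 * (1 / Real.sqrt (η * v) / (η * v)) * (2 * R * v)) := by gcongr
      _ = R / (Real.sqrt η * η) * v⁻¹ := by
        rw [Real.sqrt_mul hη0.le]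
        have hs := Real.sqrt_pos.2 hv
        have hs2 := Real.sq_sqrt hv.le
        have hs3 := Real.sqrt_pos.2 hη0
        field_simp
        rw [hs2]
  · exact (integrable_inv_one_add_sq.const_mul _).integrableOn
  · refine Eventually.of_forall fun t z hz => ?_
    obtain ⟨h1, h2⟩ := hball z hz
    have hz0 : 0 < z.re := by linarith
    have hs := slit hz0 t
    have hne := Complex.slitPlane_ne_zero hs
    unfold gc rt
    have hd : HasDerivAt (fun z : ℂ => 1 + z^2 * (t:ℂ)^2) (2 * z * (t:ℂ)^2) z := by
      refine ((((hasDerivAt_id z).pow 2).mul_const ((t:ℂ)^2)).const_add 1).congr_deriv ?_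
      simp
    refine ((hd.cpow_const (c := ((-1/2 : ℝ) : ℂ)) hs).const_mul _).congr_deriv ?_
    rw [Complex.cpow_sub _ _ hne, Complex.cpow_one]

lemma Jc_real (x : ℝ) : ∃ y : ℝ, Jc (x : ℂ) = (y : ℂ) := by
  refine ⟨∫ t in Set.Ioi (0:ℝ), 1 / Real.sqrt (1 + t^2) * (1 / Real.sqrt (1 + x^2 * t^2)), ?_⟩
  unfold Jc
  rw [← integral_complex_ofReal]
  refine setIntegral_congr_fun measurableSet_Ioi fun t ht => ?_
  unfold gc
  rw [show (1 + (x:ℂ)^2 * (t:ℂ)^2) = ((1 + x^2 * t^2 : ℝ) : ℂ) by push_cast; ring, rt_pos (by positivity)]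
  push_cast; ring

lemma gc_lim {κ t : ℝ} (hκ : 0 < κ) (ht : 1 - κ^2 * t^2 ≠ 0) :
    Tendsto (fun ε : ℝ => gc ((ε:ℂ) + (κ:ℂ) * Complex.I) t) (𝓝[>] 0) (𝓝 (gc (((0:ℝ):ℂ) + (κ:ℂ) * Complex.I) t)) := by
  unfold gc
  refine Tendsto.const_mul _ ?_
  set z : ℝ → ℂ := fun ε => 1 + ((ε:ℂ) + (κ:ℂ) * Complex.I)^2 * (t:ℂ)^2 with hz
  have hcont : Continuous z := by rw [hz]; fun_prop
  have h1 : ∀ ε : ℝ, (z ε).re = 1 + (ε^2 - κ^2) * t^2 := by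
    intro ε; simp [hz, pow_two, Complex.mul_re, Complex.mul_im]
  have h2 : ∀ ε : ℝ, (z ε).im = 2 * ε * κ * t^2 := by
    intro ε; simp [hz, pow_two, Complex.mul_re, Complex.mul_im]
    left; ring
  change Tendsto (fun ε => rt (z ε)) (𝓝[>] 0) (𝓝 (rt (z 0)))
  have hre : (z 0).re = 1 - κ^2 * t^2 := by rw [h1]; ring
  have him : (z 0).im = 0 := by rw [h2]; ring
  have hz0 : Tendsto z (𝓝[>] 0) (𝓝 (z 0)) := hcont.continuousAt.mono_left nhdsWithin_le_nhds
  unfold rt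
  rcases lt_or_gt_of_ne ht with h | h
  · have hne : z 0 ≠ 0 := fun h0 => by rw [h0] at hre; simp at hre; exact ht hre.symm
    have hl := Complex.continuousWithinAt_log_of_re_neg_of_im_zero (z := z 0) (by rw [hre]; exact h) him
    have hz1 : Tendsto z (𝓝[>] 0) (𝓝[{z : ℂ | 0 ≤ z.im}] (z 0)) := by
      refine tendsto_nhdsWithin_iff.2 ⟨hz0, ?_⟩
      filter_upwards [self_mem_nhdsWithin] with ε hε
      have hε' : 0 < ε := hε
      change 0 ≤ (z ε).im
      rw [h2]; positivity
    have h3 := hl.tendsto.comp hz1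
    have h4 := (Complex.continuous_exp.tendsto _).comp (h3.mul_const (((-1/2 : ℝ) : ℂ)))
    rw [Complex.cpow_def_of_ne_zero hne]
    refine h4.congr' ?_
    have : ∀ᶠ ε in 𝓝[>] (0:ℝ), z ε ≠ 0 := hz0.eventually_ne hne
    filter_upwards [this] with ε hε
    simp only [Function.comp]
    rw [Complex.cpow_def_of_ne_zero hε]
  · have hs : z 0 ∈ Complex.slitPlane := by
      rw [Complex.mem_slitPlane_iff]; left; rw [hre]; exact h
    exact ((continuousAt_cpow_const hs).tendsto.comp hz0)

lemma Jc_lim {κ : ℝ} (hκ : 0 < κ) :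
    Tendsto (fun ε : ℝ => Jc ((ε:ℂ) + (κ:ℂ) * Complex.I)) (𝓝[>] 0) (𝓝 (Jc (((0:ℝ):ℂ) + (κ:ℂ) * Complex.I))) := by
  unfold Jc
  refine tendsto_integral_filter_of_dominated_convergence (fun t => κ * hh κ (κ * t))
    (Eventually.of_forall fun ε => (gc_meas _).aestronglyMeasurable) ?_ (dom_int hκ) ?_
  · refine Eventually.of_forall fun ε => ?_
    filter_upwards [ae_ne hκ] with t ht
    refine gc_le hκ ?_ ht
    have := bd_im ((ε:ℂ) + (κ:ℂ) * Complex.I) t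
    simpa using this
  · filter_upwards [ae_ne hκ] with t ht
    exact gc_lim hκ ht

lemma Jc_bdry {κ : ℝ} (hκ : 0 < κ) :
    Jc (((0:ℝ):ℂ) + (κ:ℂ) * Complex.I) = (pp κ : ℂ) - Complex.I * (qq κ : ℂ) := by
  set G : ℝ → ℂ := fun s => ((1 / Real.sqrt (κ^2 + s^2) : ℝ) : ℂ) * rt ((1 - s^2 : ℝ) : ℂ) with hG
  have e1 : Jc (((0:ℝ):ℂ) + (κ:ℂ) * Complex.I) = ∫ t in Set.Ioi (0:ℝ), (κ:ℂ) * G (κ * t) := by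
    unfold Jc
    refine setIntegral_congr_fun measurableSet_Ioi fun t ht => ?_
    simp only [hG, gc]
    rw [show (1 + (((0:ℝ):ℂ) + (κ:ℂ) * Complex.I)^2 * (t:ℂ)^2) = ((1 - (κ * t)^2 : ℝ) : ℂ) by
      push_cast; linear_combination ((κ:ℂ) * t)^2 * Complex.I_sq, ← mul_assoc, ← Complex.ofReal_mul]
    congr 2
    rw [mul_pow, show κ^2 + κ^2 * t^2 = κ^2 * (1 + t^2) by ring, Real.sqrt_mul (by positivity), Real.sqrt_sq hκ.le]
    field_simp
  have e2 : ∀ s ∈ Set.Ioo (0:ℝ) 1, G s = ((hh κ s : ℝ) : ℂ) := by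
    intro s hs
    have h : 0 < 1 - s^2 := by nlinarith [hs.1, hs.2]
    simp only [hG, hh]
    rw [rt_pos h, ← Complex.ofReal_mul, one_div_mul_one_div, abs_of_pos h, Real.sqrt_mul (by positivity)]
  have e3 : ∀ s ∈ Set.Ioi (1:ℝ), G s = -Complex.I * ((hh κ s : ℝ) : ℂ) := by
    intro s hs
    have hs' : 1 < s := hs
    have h : 1 - s^2 < 0 := by nlinarith
    simp only [hG, hh]
    rw [rt_neg h, mul_left_comm, ← Complex.ofReal_mul, one_div_mul_one_div, abs_of_neg h, Real.sqrt_mul (by positivity)]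
  have i1 : IntegrableOn G (Set.Ioo 0 1) :=
    IntegrableOn.congr_fun ((hh_p hκ).1.ofReal) (fun s hs => (e2 s hs).symm) measurableSet_Ioo
  have i2 : IntegrableOn G (Set.Ioi 1) :=
    IntegrableOn.congr_fun (((hh_q κ).1.ofReal).const_mul (-Complex.I)) (fun s hs => (e3 s hs).symm) measurableSet_Ioi
  have hdis : Disjoint (Set.Ioo (0:ℝ) 1) (Set.Ioi 1) :=
    Set.disjoint_left.2 fun x hx hx' => absurd hx.2 (not_lt.2 (le_of_lt hx'))
  rw [e1, MeasureTheory.integral_const_mul, integral_comp_mul_left_Ioi G 0 hκ, mul_zero, Complex.real_smul, ← mul_assoc, ← Complex.ofReal_mul,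
    mul_inv_cancel₀ hκ.ne', Complex.ofReal_one, one_mul, setIntegral_congr_set Ioi_split,
    setIntegral_union hdis measurableSet_Ioi i1 i2,
    setIntegral_congr_fun measurableSet_Ioo e2, setIntegral_congr_fun measurableSet_Ioi e3, MeasureTheory.integral_const_mul,
    integral_complex_ofReal, integral_complex_ofReal, (hh_p hκ).2, (hh_q κ).2]
  ring

lemma cauchy_bd {ε T : ℝ} (hε : 0 < ε) (hT : ε < T) :
    |(∫ y in (0:ℝ)..T, Jc ((ε:ℂ) + (y:ℂ) * Complex.I)^3).re| ≤ 2 * (T * MM T^3) := by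
  have hT0 : 0 < T := hε.trans hT
  have hM := MM_nonneg T
  have H := Complex.integral_boundary_rect_eq_zero_of_differentiableOn (fun c => Jc c^3) (ε:ℂ) ((T:ℂ) + (T:ℂ) * Complex.I) (by
    intro z hz
    have hz1 : z.re ∈ Set.uIcc ε T := by
      have := hz.1
      simpa using this
    rw [Set.uIcc_of_le hT.le] at hz1
    exact ((Jc_diff (hε.trans_le hz1.1)).pow 3).differentiableWithinAt)
  simp only [Complex.ofReal_re, Complex.ofReal_im, Complex.add_re, Complex.add_im, Complex.mul_re, Complex.mul_im, Complex.I_re, Complex.I_im,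
    mul_zero, mul_one, sub_zero, add_zero, zero_add, zero_mul, Complex.ofReal_zero, smul_eq_mul] at H
  have hB : (∫ x in ε..T, Jc (x:ℂ)^3).im = 0 := by
    choose f hf using Jc_real
    have : ∀ x : ℝ, Jc (x:ℂ)^3 = ((f x^3 : ℝ) : ℂ) := fun x => by rw [hf x]; push_cast; ring
    simp_rw [this]
    rw [intervalIntegral.integral_ofReal, Complex.ofReal_im]
  have hTop : ‖∫ x in ε..T, Jc ((x:ℂ) + (T:ℂ) * Complex.I)^3‖ ≤ MM T^3 * |T - ε| := by
    refine intervalIntegral.norm_integral_le_of_norm_le_const fun x hx => ?_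
    rw [norm_pow]
    have := Jc_le (c := (x:ℂ) + (T:ℂ) * Complex.I) hT0 (fun t => by
      have := bd_im ((x:ℂ) + (T:ℂ) * Complex.I) t
      simpa using this)
    gcongr
  have hRt : ‖∫ y in (0:ℝ)..T, Jc ((T:ℂ) + (y:ℂ) * Complex.I)^3‖ ≤ MM T^3 * |T - 0| := by
    refine intervalIntegral.norm_integral_le_of_norm_le_const fun y hy => ?_
    rw [norm_pow]
    have hn : T ≤ ‖(T:ℂ) + (y:ℂ) * Complex.I‖ := by
      have := (le_abs_self _).trans (Complex.abs_re_le_norm ((T:ℂ) + (y:ℂ) * Complex.I))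
      simpa using this
    have h1 := Jc_le (hT0.trans_le hn) (bd_norm ((T:ℂ) + (y:ℂ) * Complex.I))
    have h2 := h1.trans (MM_anti hT0 hn)
    gcongr
  have him := congrArg Complex.im H
  simp only [Complex.sub_im, Complex.add_im, Complex.mul_im, Complex.I_re, Complex.I_im, zero_mul, one_mul, zero_add, Complex.zero_im, hB] at him
  rw [abs_of_pos (by linarith)] at hTop hRt
  have a1 := (Complex.abs_im_le_norm _).trans hTop
  have a2 := (Complex.abs_re_le_norm _).trans hRt
  have hM3 : 0 ≤ MM T^3 := by positivity
  rw [abs_le] at *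
  have : MM T^3 * (T - ε) ≤ T * MM T^3 := by nlinarith
  constructor <;> linarith [a1.1, a1.2, a2.1, a2.2]

lemma edge_bd {T : ℝ} (hT : 0 < T) :
    |∫ y in (0:ℝ)..T, (pp y^3 - 3 * (pp y * qq y^2))| ≤ 2 * (T * MM T^3) := by
  have hmono : IntervalIntegrable (fun r => MM r^3) volume 0 T :=
    (intervalIntegrable_iff_integrableOn_Ioc_of_le hT.le).2 (MM3_int.mono_set fun x hx => hx.1)
  have hlim : Tendsto (fun ε : ℝ => ∫ y in (0:ℝ)..T, Jc ((ε:ℂ) + (y:ℂ) * Complex.I)^3) (𝓝[>] 0)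
      (𝓝 (∫ y in (0:ℝ)..T, Jc (((0:ℝ):ℂ) + (y:ℂ) * Complex.I)^3)) := by
    refine intervalIntegral.tendsto_integral_filter_of_dominated_convergence (fun y => MM y^3) ?_ ?_ hmono ?_
    · filter_upwards [self_mem_nhdsWithin] with ε hε
      have hε' : 0 < ε := hε
      refine Continuous.aestronglyMeasurable ?_
      refine continuous_iff_continuousAt.2 fun y => ?_
      have h1 : ContinuousAt Jc ((ε:ℂ) + (y:ℂ) * Complex.I) := (Jc_diff (by simpa using hε')).continuousAt
      have h2 : ContinuousAt (fun y : ℝ => (ε:ℂ) + (y:ℂ) * Complex.I) y := by fun_prop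
      exact (ContinuousAt.comp (f := fun y : ℝ => (ε:ℂ) + (y:ℂ) * Complex.I) h1 h2).pow 3
    · refine Eventually.of_forall fun ε => Eventually.of_forall fun y hy => ?_
      rw [Set.uIoc_of_le hT.le] at hy
      rw [norm_pow]
      have := Jc_le (c := (ε:ℂ) + (y:ℂ) * Complex.I) hy.1 (fun t => by
        have := bd_im ((ε:ℂ) + (y:ℂ) * Complex.I) t
        simpa using this)
      gcongr
    · refine Eventually.of_forall fun y hy => ?_
      rw [Set.uIoc_of_le hT.le] at hy
      exact (Jc_lim hy.1).pow 3
  have hval : (∫ y in (0:ℝ)..T, Jc (((0:ℝ):ℂ) + (y:ℂ) * Complex.I)^3).re = ∫ y in (0:ℝ)..T, (pp y^3 - 3 * (pp y * qq y^2)) := by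
    rw [intervalIntegral.integral_of_le hT.le, intervalIntegral.integral_of_le hT.le]
    have hint : Integrable (fun y : ℝ => Jc (((0:ℝ):ℂ) + (y:ℂ) * Complex.I)^3) (volume.restrict (Set.Ioc 0 T)) := by
      have h1 : IntegrableOn (fun r => MM r^3) (Set.Ioc 0 T) := MM3_int.mono_set fun x hx => hx.1
      have hm : AEStronglyMeasurable (fun y : ℝ => ((pp y : ℂ) - Complex.I * (qq y : ℂ))^3) (volume.restrict (Set.Ioc 0 T)) := by
        have := pp_meas
        have := qq_meas
        apply Measurable.aestronglyMeasurable
        fun_prop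
      refine Integrable.mono' h1 (hm.congr ?_) ?_
      · filter_upwards [ae_restrict_mem measurableSet_Ioc] with y hy
        rw [Jc_bdry hy.1]
      · filter_upwards [ae_restrict_mem measurableSet_Ioc] with y hy
        rw [norm_pow]
        have := Jc_le (c := ((0:ℝ):ℂ) + (y:ℂ) * Complex.I) hy.1 (fun t => by
          have := bd_im (((0:ℝ):ℂ) + (y:ℂ) * Complex.I) t
          simpa using this)
        gcongr
    have := integral_re hint
    simp only [RCLike.re_eq_complex_re] at this
    rw [← this]
    refine setIntegral_congr_fun measurableSet_Ioc fun y hy => ?_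
    rw [Jc_bdry hy.1]
    simp [pow_succ, Complex.mul_re, Complex.mul_im]
    ring
  rw [← hval]
  have h1 := ((Complex.continuous_re.tendsto _).comp hlim).abs
  refine le_of_tendsto h1 ?_
  filter_upwards [Ioo_mem_nhdsGT hT] with ε hε
  exact cauchy_bd hε.1 hε.2

lemma hC_final : ∫ k in Set.Ioo (0:ℝ) 1, (JR k^3 - 3 * (JR k * UK k^2)) = 0 := by
  rw [hC_red]
  have h1 := (intervalIntegral_tendsto_integral_Ioi 0 pq_int tendsto_id).abs
  have h2 : Tendsto (fun T : ℝ => 2 * (T * MM T^3)) atTop (𝓝 0) := by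
    simpa using MM_decay.const_mul 2
  have h3 := le_of_tendsto_of_tendsto h1 h2 (by
    filter_upwards [eventually_gt_atTop 0] with T hT
    exact edge_bd hT)
  exact abs_eq_zero.1 (le_antisymm h3 (abs_nonneg _))

theorem stmt_16 :
    (∫ k in (0:ℝ)..1, (ellipticK (Real.sqrt (1-k^2)))^3)
        = (Real.Gamma (1/4))^8 / (128 * π^2) ∧
    (10/3) * (∫ k in (0:ℝ)..1, (ellipticK k)^3)
        = (Real.Gamma (1/4))^8 / (128 * π^2) ∧
    5 * (∫ k in (0:ℝ)..1, (ellipticK k)^3 * k)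
        = (Real.Gamma (1/4))^8 / (128 * π^2) ∧
    3 * (∫ k in (0:ℝ)..1, (ellipticK k)^2 * ellipticK (Real.sqrt (1-k^2)))
        = (Real.Gamma (1/4))^8 / (128 * π^2) ∧
    2 * (∫ k in (0:ℝ)..1, ellipticK k * (ellipticK (Real.sqrt (1-k^2)))^2)
        = (Real.Gamma (1/4))^8 / (128 * π^2) ∧
    6 * (∫ k in (0:ℝ)..1, (ellipticK k)^2 * ellipticK (Real.sqrt (1-k^2)) * k)
        = (Real.Gamma (1/4))^8 / (128 * π^2) := by
  exact final_assembly JR3_integrable JR3_value hC_final
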